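/- Let q be a braiding matrix with connected Dynkin diagram such that B_q is finite dimensional, and let B be a pre-Nichols algebra of q with finite GKdim. Let i,j,k ∈ I_θ be such that q_{ii} = q_{kk} = −1, q̃_{ik} = 1, q̃_{ij} ∈ G_3' and q_{jj} = −q̃_{jk} = ±q̃_{ij}. Then [x_i, x_{jjk}]_c = (1 + q_{jj}²) q_{kj}^{−1} [x_{ijk}, x_j]_c + (1 + q_{jj}²)(1 + q_{jj}) q_{ij} x_j x_{ijk} in B. -/

import Mathlib

/-
Common framework for formalizing statements from
"Finite GK-dimensional pre-Nichols algebras of (super)modular and unidentified type"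
(Angiono, Campagnolo, Sanmarco).

We work over `ℂ` (an algebraically closed field of characteristic zero).
A braiding matrix is `q : Fin θ → Fin θ → ℂˣ`.  The tensor algebra `T(V)` of the
associated braided vector space of diagonal type is realized as the free algebra
on `Fin θ`.  The braided bialgebra structure on `T(V)` (the braided coproduct,
uniquely determined by the braiding matrix) is packaged in the structure
`BraidedStr`: its fields characterize it uniquely, so quantifying over
`S : BraidedStr θ q` is equivalent to using "the" braided coproduct.

A pre-Nichols algebra of `q` is the quotient `T(V)/I` by an ℕ₀-homogeneous
(two-sided) braided bi-ideal `I` generated in degrees ≥ 2 (`IsPreNicholsIdeal`);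
such an ideal is automatically contained in the defining ideal `Jq` of the
Nichols algebra, which is the largest such ideal.  A statement
"`x = 0` holds in the pre-Nichols algebra `T(V)/I`" is formalized as `x ∈ I`.
-/

open scoped TensorProduct

noncomputable section

namespace PreNicholsPaper

/-- The tensor algebra `T(V)` of the braided vector space of diagonal type of rank `θ`. -/
abbrev TV (θ : ℕ) := FreeAlgebra ℂ (Fin θ)

/-- The generator `x_i` of `T(V)`. -/
def gen (θ : ℕ) (i : Fin θ) : TV θ := FreeAlgebra.ι ℂ i

/-- The monomial `x_{i_1} ⋯ x_{i_n}` associated to a word. -/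
def wordElem (θ : ℕ) (w : List (Fin θ)) : TV θ := (w.map (gen θ)).prod

/-- The multidegree in `ℕ₀^θ` of a word. -/
def degW (θ : ℕ) (w : List (Fin θ)) : Fin θ → ℕ := fun i => w.count i

/-- `α_i`, the `i`-th canonical basis vector of `ℕ₀^θ`. -/
def δ (θ : ℕ) (i : Fin θ) : Fin θ → ℕ := fun k => if k = i then 1 else 0

/-- The bilinear form `ℕ₀^θ × ℕ₀^θ → ℂˣ` attached to the braiding matrix,
`q(α_i, α_j) = q_{ij}`, evaluated in `ℂ`. -/
def qf {θ : ℕ} (q : Fin θ → Fin θ → ℂˣ) (a b : Fin θ → ℕ) : ℂ :=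
  ∏ i : Fin θ, ∏ j : Fin θ, (q i j : ℂ) ^ (a i * b j)

/-- `q̃_{ij} = q_{ij} q_{ji}`. -/
def qtil {θ : ℕ} (q : Fin θ → Fin θ → ℂˣ) (i j : Fin θ) : ℂ := (q i j : ℂ) * (q j i : ℂ)

/-- The braided commutator `[u,v]_c = uv - q(a,b) vu` of elements `u, v`
which are homogeneous of multidegrees `a`, `b` respectively. -/
def brk {θ : ℕ} (q : Fin θ → Fin θ → ℂˣ) (a b : Fin θ → ℕ) (u v : TV θ) : TV θ :=
  u * v - qf q a b • (v * u)

/-- `(ad_c x_i) y = x_i y - q(α_i, b) y x_i` for `y` homogeneous of multidegree `b`. -/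
def ad1 {θ : ℕ} (q : Fin θ → Fin θ → ℂˣ) (i : Fin θ) (b : Fin θ → ℕ) (y : TV θ) : TV θ :=
  brk q (δ θ i) b (gen θ i) y

/-- The iterated braided adjoint `x_{i_1 i_2 ⋯ i_k} = (ad_c x_{i_1}) x_{i_2 ⋯ i_k}`. -/
def xw {θ : ℕ} (q : Fin θ → Fin θ → ℂˣ) : List (Fin θ) → TV θ
  | [] => 1
  | [i] => gen θ i
  | i :: w => ad1 q i (degW θ w) (xw q w)

/-- `(ad_c x_i)^m x_j`. -/
def adpow {θ : ℕ} (q : Fin θ → Fin θ → ℂˣ) (i j : Fin θ) : ℕ → TV θ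
  | 0 => gen θ j
  | m + 1 => ad1 q i (fun k => m * δ θ i k + δ θ j k) (adpow q i j m)

/-- The homogeneous component of total degree `n` of `T(V)`. -/
def homogTot (θ : ℕ) (n : ℕ) : Submodule ℂ (TV θ) :=
  Submodule.span ℂ {x | ∃ w : List (Fin θ), w.length = n ∧ x = wordElem θ w}

/-- The homogeneous component of multidegree `d ∈ ℕ₀^θ` of `T(V)`. -/
def homogD (θ : ℕ) (d : Fin θ → ℕ) : Submodule ℂ (TV θ) :=
  Submodule.span ℂ {x | ∃ w : List (Fin θ), degW θ w = d ∧ x = wordElem θ w}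

/-- The braided bialgebra structure on `T(V)` determined by the braiding matrix `q`:
the braided coproduct `Δ` together with the multiplication `mulB` of the braided
tensor product `T(V) ⊗ T(V)`.  These axioms determine `Δ` and `mulB` uniquely. -/
structure BraidedStr (θ : ℕ) (q : Fin θ → Fin θ → ℂˣ) where
  Δ : TV θ →ₗ[ℂ] TensorProduct ℂ (TV θ) (TV θ)
  mulB : TensorProduct ℂ (TV θ) (TV θ) →ₗ[ℂ]
    TensorProduct ℂ (TV θ) (TV θ) →ₗ[ℂ] TensorProduct ℂ (TV θ) (TV θ)
  mulB_spec : ∀ (a d : TV θ) (wb wc : List (Fin θ)),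
    mulB (a ⊗ₜ[ℂ] wordElem θ wb) (wordElem θ wc ⊗ₜ[ℂ] d)
      = qf q (degW θ wb) (degW θ wc) • ((a * wordElem θ wc) ⊗ₜ[ℂ] (wordElem θ wb * d))
  Δ_one : Δ 1 = 1 ⊗ₜ[ℂ] 1
  Δ_gen : ∀ i, Δ (gen θ i) = gen θ i ⊗ₜ[ℂ] 1 + 1 ⊗ₜ[ℂ] gen θ i
  Δ_mul : ∀ u v : TV θ, Δ (u * v) = mulB (Δ u) (Δ v)

variable {θ : ℕ} {q : Fin θ → Fin θ → ℂˣ}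

/-- `x` is a primitive element. -/
def IsPrimitiveIn (S : BraidedStr θ q) (x : TV θ) : Prop :=
  S.Δ x = x ⊗ₜ[ℂ] (1 : TV θ) + (1 : TV θ) ⊗ₜ[ℂ] x

/-- The submodule `I ⊗ T(V) + T(V) ⊗ J` of `T(V) ⊗ T(V)`. -/
def mixedPair (I J : Submodule ℂ (TV θ)) : Submodule ℂ (TensorProduct ℂ (TV θ) (TV θ)) :=
  Submodule.span ℂ
    ({x | ∃ a b : TV θ, a ∈ I ∧ x = a ⊗ₜ[ℂ] b} ∪ {x | ∃ a b : TV θ, b ∈ J ∧ x = a ⊗ₜ[ℂ] b})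

/-- The submodule `I ⊗ T(V) + T(V) ⊗ I` of `T(V) ⊗ T(V)`. -/
def mixedSub (I : Submodule ℂ (TV θ)) : Submodule ℂ (TensorProduct ℂ (TV θ) (TV θ)) :=
  mixedPair I I

/-- `I` is the defining ideal of a pre-Nichols algebra of `q`：an ℕ₀-homogeneous
two-sided (bi-)ideal of `T(V)` generated in degrees `≥ 2` which is also a coideal.
Such an ideal is automatically contained in the defining ideal `Jq` of the Nichols
algebra, and the pre-Nichols algebra is the quotient `T(V)/I`. -/
structure IsPreNicholsIdeal (S : BraidedStr θ q) (I : Submodule ℂ (TV θ)) : Prop where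
  mul_left : ∀ a x : TV θ, x ∈ I → a * x ∈ I
  mul_right : ∀ a x : TV θ, x ∈ I → x * a ∈ I
  homog_ge2 : I = Submodule.span ℂ {x | x ∈ I ∧ ∃ n, 2 ≤ n ∧ x ∈ homogTot θ n}
  coideal : ∀ x ∈ I, S.Δ x ∈ mixedSub I

/-- The defining ideal `J_q` of the Nichols algebra `B_q = T(V)/J_q`:
the maximal homogeneous braided Hopf ideal generated in degrees `≥ 2`. -/
def Jq (S : BraidedStr θ q) : Submodule ℂ (TV θ) := sSup {I | IsPreNicholsIdeal S I}

/-- The standard filtration of `T(V)`: span of words of length `≤ n`. -/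
def Wfil (θ : ℕ) (n : ℕ) : Submodule ℂ (TV θ) :=
  Submodule.span ℂ {x | ∃ w : List (Fin θ), w.length ≤ n ∧ x = wordElem θ w}

/-- The quotient algebra `T(V)/I` has finite Gelfand–Kirillov dimension, i.e.
the standard filtration of the (finitely generated) quotient has polynomial growth. -/
def FinGK (I : Submodule ℂ (TV θ)) : Prop :=
  ∃ C d : ℕ, ∀ n : ℕ, Module.finrank ℂ ((Wfil θ n).map I.mkQ) ≤ C * (n + 1) ^ d

/-- The Gelfand–Kirillov dimension of the quotient algebra `T(V)/I`. -/
def GKdim (I : Submodule ℂ (TV θ)) : ℝ :=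
  Filter.limsup
    (fun n : ℕ => Real.log (Module.finrank ℂ ((Wfil θ n).map I.mkQ)) / Real.log n)
    Filter.atTop

/-- `I` defines an eminent pre-Nichols algebra: it is a finite-GKdim pre-Nichols
algebra, and every finite-GKdim pre-Nichols algebra of `q` is a quotient of it. -/
def IsEminent (S : BraidedStr θ q) (I : Submodule ℂ (TV θ)) : Prop :=
  IsPreNicholsIdeal S I ∧ FinGK I ∧
    ∀ I' : Submodule ℂ (TV θ), IsPreNicholsIdeal S I' → FinGK I' → I ≤ I'

/-- The Dynkin diagram of the braiding matrix `q`: vertices `Fin θ`, an edge between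
`i ≠ j` iff `q̃_{ij} ≠ 1`. -/
def dynkin {θ : ℕ} (q : Fin θ → Fin θ → ℂˣ) : SimpleGraph (Fin θ) :=
  SimpleGraph.fromRel (fun i j => qtil q i j ≠ 1)

/-- The quantum number `(m)_t = 1 + t + ⋯ + t^{m-1}`. -/
def qnum (t : ℂ) (m : ℕ) : ℂ := ∑ k ∈ Finset.range m, t ^ k

/-- The set of `n ∈ ℕ₀` such that `(n+1)_{q_{ii}} (1 - q_{ii}^n q̃_{ij}) = 0`,
i.e. such that `(ad_c x_i)^{n+1} x_j = 0` in the Nichols algebra.  The entry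
`c_{ij}` of the generalized Cartan matrix is `-(min of this set)`. -/
def cSet {θ : ℕ} (q : Fin θ → Fin θ → ℂˣ) (i j : Fin θ) : Set ℕ :=
  {n | qnum (q i i : ℂ) (n + 1) * (1 - (q i i : ℂ) ^ n * qtil q i j) = 0}

/-- The generalized Cartan matrix of `q`. -/
def cij {θ : ℕ} (q : Fin θ → Fin θ → ℂˣ) (i j : Fin θ) : ℤ :=
  if i = j then 2 else -(Int.ofNat (sInf (cSet q i j)))

/-- All entries `c_{ij}` are defined at the vertex `i`. -/
def reflectable {θ : ℕ} (q : Fin θ → Fin θ → ℂˣ) (i : Fin θ) : Prop :=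
  ∀ j, j ≠ i → (cSet q i j).Nonempty

/-- The `i`-th reflection of the braiding matrix:
`(r_i q)_{jk} = q(s_i α_j, s_i α_k)` where `s_i α_j = α_j - c_{ij} α_i`. -/
def reflectMat {θ : ℕ} (q : Fin θ → Fin θ → ℂˣ) (i : Fin θ) : Fin θ → Fin θ → ℂˣ :=
  fun j k =>
    q j k * q j i ^ (-(cij q i k)) * q i k ^ (-(cij q i j)) * q i i ^ (cij q i j * cij q i k)

/-- The reflection `s_i` acting on `ℤ^θ`. -/
def sRefl {θ : ℕ} (q : Fin θ → Fin θ → ℂˣ) (i : Fin θ) (β : Fin θ → ℤ) : Fin θ → ℤ :=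
  fun k => β k - (if k = i then ∑ j, cij q i j * β j else 0)

/-- The (real) roots of `q`, together with the base points of the Weyl groupoid at
which they live: pairs `(q', β)` obtained from a simple root of `q` by iterated
reflections. -/
inductive ReachRoot {θ : ℕ} (q₀ : Fin θ → Fin θ → ℂˣ) :
    (Fin θ → Fin θ → ℂˣ) → (Fin θ → ℤ) → Prop
  | simple (j : Fin θ) : ReachRoot q₀ q₀ (fun k => if k = j then 1 else 0)
  | reflect {q' : Fin θ → Fin θ → ℂˣ} {β : Fin θ → ℤ} (i : Fin θ) :
      ReachRoot q₀ q' β → ReachRoot q₀ (reflectMat q' i) (sRefl q' i β)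

/-- `q` has a finite (generalized) root system: all reflections are defined at every
point of the Weyl groupoid, and the set of roots so obtained is finite. -/
def FiniteRootSystem {θ : ℕ} (q : Fin θ → Fin θ → ℂˣ) : Prop :=
  (∀ q' i, (∃ β, ReachRoot q q' β) → reflectable q' i) ∧
    Set.Finite {β : Fin θ → ℤ | ∃ q', ReachRoot q q' β}

/-- Conjecture (Andruskiewitsch–Angiono–Heckenberger): the root system of a Nichols
algebra of diagonal type with finite Gelfand–Kirillov dimension is finite. -/
def AAH : Prop :=
  ∀ (θ : ℕ) (q : Fin θ → Fin θ → ℂˣ) (S : BraidedStr θ q), FinGK (Jq S) → FiniteRootSystem q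

/-- The two-sided ideal of `T(V)` generated by a set. -/
def idealGen (θ : ℕ) (s : Set (TV θ)) : Submodule ℂ (TV θ) :=
  Submodule.span ℂ {x | ∃ g ∈ s, ∃ a b : TV θ, x = a * g * b}

end PreNicholsPaper

namespace PreNicholsPaper

/-!
A homogeneous element `y` of degree at least two which is primitive and nonzero in `T(V)/I` spans,
together with the generators, a braided subspace of diagonal type of rank `θ + 1`. By comparison
of leading terms, the Nichols algebra of this larger space grows at most as fast as `T(V)/I`: a
relation of `T(V)/I` among `y` and the generators has its top component killed by all iterated
skew derivations, hence lying in `Jq`. The AAH conjecture then makes the enlarged root system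
finite, and reflections contradict this. The argument is applied first to `x_{ik}`, whose vertex
has label `1` and is joined to `j`, and then to the quartic relator, which is primitive modulo
`x_{ik}` and whose vertex acquires the label `1` after reflecting at `i` and `k` while still being
joined to `i`.
-/

section SliceMaps

variable {K M N M' N' : Type*}

section CommSemiring

variable [CommSemiring K] [AddCommMonoid M] [Module K M] [AddCommMonoid N] [Module K N]
  [AddCommMonoid M'] [Module K M'] [AddCommMonoid N'] [Module K N']

/-- The slice map `M ⊗ N → M`, `m ⊗ n ↦ η(n) m`, of a functional `η` on the right factor. -/
def rightSlice (η : N →ₗ[K] K) : M ⊗[K] N →ₗ[K] M :=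
  (TensorProduct.rid K M).toLinearMap ∘ₗ η.lTensor M

/-- The slice map `M ⊗ N → N`, `m ⊗ n ↦ η(m) n`, of a functional `η` on the left factor. -/
def leftSlice (η : M →ₗ[K] K) : M ⊗[K] N →ₗ[K] N :=
  (TensorProduct.lid K N).toLinearMap ∘ₗ η.rTensor N

@[simp]
theorem rightSlice_tmul (η : N →ₗ[K] K) (m : M) (n : N) : rightSlice η (m ⊗ₜ n) = η n • m := by
  simp [rightSlice]

@[simp]
theorem leftSlice_tmul (η : M →ₗ[K] K) (m : M) (n : N) : leftSlice η (m ⊗ₜ n) = η m • n := by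
  simp [leftSlice]

theorem apply_rightSlice (f : M →ₗ[K] K) (g : N →ₗ[K] K) (X : M ⊗[K] N) :
    f (rightSlice g X) = g (leftSlice f X) := by
  have : f ∘ₗ rightSlice g = g ∘ₗ leftSlice f :=
    TensorProduct.ext' fun m n => by simp [mul_comm]
  exact LinearMap.congr_fun this X

theorem rightSlice_map (η : N' →ₗ[K] K) (f : M →ₗ[K] M') (g : N →ₗ[K] N') (X : M ⊗[K] N) :
    rightSlice η (TensorProduct.map f g X) = f (rightSlice (η ∘ₗ g) X) := by
  have : rightSlice η ∘ₗ TensorProduct.map f g = f ∘ₗ rightSlice (η ∘ₗ g) :=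
    TensorProduct.ext' fun m n => by simp
  exact LinearMap.congr_fun this X

theorem leftSlice_map (η : M' →ₗ[K] K) (f : M →ₗ[K] M') (g : N →ₗ[K] N') (X : M ⊗[K] N) :
    leftSlice η (TensorProduct.map f g X) = g (leftSlice (η ∘ₗ f) X) := by
  have : leftSlice η ∘ₗ TensorProduct.map f g = g ∘ₗ leftSlice (η ∘ₗ f) :=
    TensorProduct.ext' fun m n => by simp
  exact LinearMap.congr_fun this X

theorem rightSlice_smul (c : K) (η : N →ₗ[K] K) (X : M ⊗[K] N) :
    rightSlice (c • η) X = c • rightSlice η X := by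
  simp [rightSlice, LinearMap.lTensor_smul]

end CommSemiring

theorem eq_zero_of_forall_leftSlice_eq_zero [Field K] [AddCommGroup M] [Module K M]
    [AddCommGroup N] [Module K N] {ι : Type*} {f : ι → M →ₗ[K] K}
    (hf : ∀ m, (∀ i, f i m = 0) → m = 0) {X : M ⊗[K] N} (hX : ∀ i, leftSlice (f i) X = 0) :
    X = 0 := by
  classical
  let b := Module.Basis.ofVectorSpace K N
  refine (TensorProduct.equivFinsuppOfBasisRight b).injective (Finsupp.ext fun k => ?_)
  rw [TensorProduct.equivFinsuppOfBasisRight_apply, map_zero, Finsupp.zero_apply]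
  refine hf _ fun i => ?_
  change f i (rightSlice (b.coord k) X) = 0
  rw [apply_rightSlice, hX, map_zero]

end SliceMaps

section DimensionComparison

variable {K T X Y : Type*} [Field K] [AddCommGroup T] [Module K T] [AddCommGroup X] [Module K X]
  [AddCommGroup Y] [Module K Y] {f : T →ₗ[K] X} {g : T →ₗ[K] Y}

theorem exists_map_le_map_of_disjoint_ker {A B L : Submodule K T} (hAB : A ≤ B) (hLA : L ≤ A)
    (hg : A.map g ≤ L.map g) (hf : Disjoint L (LinearMap.ker f))
    (h : ∀ x ∈ B, f x = 0 → g x ∈ A.map g) :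
    ∃ M ≤ B, B.map g ≤ M.map g ∧ Disjoint M (LinearMap.ker f) := by
  obtain ⟨Q, hQ⟩ := exists_isCompl (A ⊔ (LinearMap.ker f ⊓ B))
  have hsup : A ⊔ (LinearMap.ker f ⊓ B) ⊔ Q ⊓ B = B := by
    rw [← sup_inf_assoc_of_le _ (sup_le hAB inf_le_right), hQ.sup_eq_top, top_inf_eq]
  refine ⟨L ⊔ Q ⊓ B, sup_le (hLA.trans hAB) inf_le_right, ?_, ?_⟩
  · have hker : (LinearMap.ker f ⊓ B).map g ≤ A.map g := by
      rintro _ ⟨x, ⟨hx, hxB⟩, rfl⟩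
      exact h x hxB hx
    conv_lhs => rw [← hsup, Submodule.map_sup, Submodule.map_sup]
    rw [Submodule.map_sup]
    exact sup_le_sup_right ((sup_le le_rfl hker).trans hg) _
  · rw [Submodule.disjoint_def]
    intro x hx hfx
    obtain ⟨l, hl, c, ⟨hcQ, hcB⟩, rfl⟩ := Submodule.mem_sup.1 hx
    have hc : c = 0 := by
      refine Submodule.disjoint_def.1 hQ.disjoint c ?_ hcQ
      rw [← neg_add_cancel_left l c]
      exact Submodule.add_mem_sup (A.neg_mem (hLA hl)) ⟨hfx, B.add_mem (hAB (hLA hl)) hcB⟩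
    rw [hc, add_zero] at hfx ⊢
    exact Submodule.disjoint_def.1 hf l hl hfx

theorem finrank_map_le_finrank_map_of_filtration {F : ℕ → Submodule K T} (hF : Monotone F)
    [∀ n, FiniteDimensional K (F n)] (h0 : ∀ x ∈ F 0, f x = 0 → g x = 0)
    (hs : ∀ n, ∀ x ∈ F (n + 1), f x = 0 → g x ∈ (F n).map g) (n : ℕ) :
    Module.finrank K ((F n).map g) ≤ Module.finrank K ((F n).map f) := by
  obtain ⟨L, hL, hg, hf⟩ : ∃ L ≤ F n, (F n).map g ≤ L.map g ∧ Disjoint L (LinearMap.ker f) := by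
    induction n with
    | zero =>
      exact exists_map_le_map_of_disjoint_ker (A := ⊥) bot_le le_rfl le_rfl disjoint_bot_left
        fun x hx hfx => h0 x hx hfx ▸ Submodule.zero_mem _
    | succ n ih =>
      obtain ⟨L, hL, hg, hf⟩ := ih
      exact exists_map_le_map_of_disjoint_ker (hF n.le_succ) hL hg hf (hs n)
  have : FiniteDimensional K L := Submodule.finiteDimensional_of_le hL
  calc Module.finrank K ((F n).map g) ≤ Module.finrank K (L.map g) := Submodule.finrank_mono hg
    _ ≤ Module.finrank K L := Submodule.finrank_map_le g L
    _ = Module.finrank K (L.map f) := by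
      rw [← LinearMap.range_domRestrict]
      exact (LinearEquiv.ofInjective (f.domRestrict L)
        (LinearMap.injective_domRestrict_iff.2 hf)).finrank_eq
    _ ≤ Module.finrank K ((F n).map f) := Submodule.finrank_mono (Submodule.map_mono hL)

end DimensionComparison

section Words

variable {θ : ℕ}

@[simp]
theorem wordElem_nil : wordElem θ [] = 1 := rfl

@[simp]
theorem wordElem_cons (i : Fin θ) (w : List (Fin θ)) :
    wordElem θ (i :: w) = gen θ i * wordElem θ w := by
  simp [wordElem]

theorem wordElem_append (v w : List (Fin θ)) :
    wordElem θ (v ++ w) = wordElem θ v * wordElem θ w := by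
  simp [wordElem]

theorem wordElem_singleton (i : Fin θ) : wordElem θ [i] = gen θ i := by
  simp

@[simp]
theorem degW_nil : degW θ [] = 0 := by
  ext; simp [degW]

@[simp]
theorem degW_cons (i : Fin θ) (w : List (Fin θ)) : degW θ (i :: w) = δ θ i + degW θ w := by
  ext j
  simp only [degW, δ, List.count_cons, Pi.add_apply, beq_iff_eq, eq_comm (a := i)]
  ring

theorem degW_append (v w : List (Fin θ)) : degW θ (v ++ w) = degW θ v + degW θ w := by
  ext i
  simp [degW]

theorem sum_degW (w : List (Fin θ)) : ∑ i, degW θ w i = w.length := by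
  induction w with
  | nil => simp
  | cons i w ih => simp [Finset.sum_add_distrib, ih, δ, add_comm]

@[simp]
theorem lift_gen {A : Type*} [Semiring A] [Algebra ℂ A] (y : Fin θ → A) (i : Fin θ) :
    FreeAlgebra.lift ℂ y (gen θ i) = y i := by
  simp [gen]

theorem algHom_ext_gen {A : Type*} [Semiring A] [Algebra ℂ A] {f g : TV θ →ₐ[ℂ] A}
    (h : ∀ i, f (gen θ i) = g (gen θ i)) : f = g :=
  FreeAlgebra.hom_ext (funext h)

/-- The basis of `T(V)` consisting of words. -/
def wordBasis (θ : ℕ) : Module.Basis (List (Fin θ)) ℂ (TV θ) :=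
  (FreeAlgebra.basisFreeMonoid ℂ (Fin θ)).reindex FreeMonoid.toList

@[simp]
theorem wordBasis_apply (w : List (Fin θ)) : wordBasis θ w = wordElem θ w := by
  simp only [wordBasis, FreeAlgebra.basisFreeMonoid, Module.Basis.reindex_apply,
    Module.Basis.map_apply, wordElem]
  simp [FreeAlgebra.equivMonoidAlgebraFreeMonoid, FreeMonoid.lift_apply]
  rfl

theorem linearMap_ext_wordElem {M : Type*} [AddCommMonoid M] [Module ℂ M] {f g : TV θ →ₗ[ℂ] M}
    (h : ∀ w, f (wordElem θ w) = g (wordElem θ w)) : f = g :=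
  (wordBasis θ).ext fun w => by simpa using h w

theorem span_range_wordElem : Submodule.span ℂ (Set.range (wordElem θ)) = ⊤ := by
  rw [← funext (wordBasis_apply (θ := θ)), (wordBasis θ).span_eq]

theorem mem_of_forall_wordElem_mem {p : Submodule ℂ (TV θ)} (h : ∀ w, wordElem θ w ∈ p)
    (x : TV θ) : x ∈ p := by
  have : Submodule.span ℂ (Set.range (wordElem θ)) ≤ p :=
    Submodule.span_le.2 (Set.range_subset_iff.2 h)
  exact this (span_range_wordElem ▸ Submodule.mem_top)

theorem span_wordElem_le {P : List (Fin θ) → Prop} {p : Submodule ℂ (TV θ)}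
    (h : ∀ w, P w → wordElem θ w ∈ p) :
    Submodule.span ℂ {x | ∃ w, P w ∧ x = wordElem θ w} ≤ p :=
  Submodule.span_le.2 fun _ ⟨w, hw, hx⟩ => hx ▸ h w hw

/-- The functional on `T(V)` reading off the coefficient of the word `w`;
`wordCoeff []` is the counit. -/
def wordCoeff (w : List (Fin θ)) : TV θ →ₗ[ℂ] ℂ := (wordBasis θ).coord w

theorem wordCoeff_wordElem (v w : List (Fin θ)) :
    wordCoeff v (wordElem θ w) = if w = v then 1 else 0 := by
  rw [wordCoeff, Module.Basis.coord_apply, ← wordBasis_apply, Module.Basis.repr_self,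
    Finsupp.single_apply]

theorem eq_zero_of_forall_wordCoeff_eq_zero {x : TV θ} (h : ∀ w, wordCoeff w x = 0) : x = 0 :=
  (wordBasis θ).forall_coord_eq_zero_iff.1 h

@[simp]
theorem wordCoeff_one (w : List (Fin θ)) : wordCoeff w 1 = if w = [] then 1 else 0 := by
  simpa [eq_comm] using wordCoeff_wordElem w []

@[simp]
theorem wordCoeff_gen (w : List (Fin θ)) (i : Fin θ) :
    wordCoeff w (gen θ i) = if w = [i] then 1 else 0 := by
  simpa [eq_comm] using wordCoeff_wordElem w [i]

@[simp]
theorem wordCoeff_nil_mul (a b : TV θ) :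
    wordCoeff [] (a * b) = wordCoeff [] a * wordCoeff [] b := by
  have : (LinearMap.mul ℂ (TV θ)).compr₂ (wordCoeff []) =
      (LinearMap.mul ℂ ℂ).compl₁₂ (wordCoeff []) (wordCoeff []) :=
    linearMap_ext_wordElem fun v => linearMap_ext_wordElem fun w => by
      cases v <;> simp [← wordElem_append, wordCoeff_wordElem, -wordElem_cons]
  exact LinearMap.congr_fun₂ this a b

theorem wordCoeff_singleton_gen_mul (a i : Fin θ) (b : TV θ) :
    wordCoeff [a] (gen θ i * b) = if i = a then wordCoeff [] b else 0 := by
  have : wordCoeff [a] ∘ₗ LinearMap.mulLeft ℂ (gen θ i) =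
      (if i = a then 1 else 0 : ℂ) • wordCoeff [] :=
    linearMap_ext_wordElem fun w => by
      rw [LinearMap.comp_apply, LinearMap.mulLeft_apply, ← wordElem_cons]
      simp [wordCoeff_wordElem, ite_and, and_comm (a := i = a), -wordElem_cons, -ite_smul]
  simpa [-ite_smul] using LinearMap.congr_fun this b

theorem wordCoeff_singleton_mul_gen (a i : Fin θ) (b : TV θ) :
    wordCoeff [a] (b * gen θ i) = if i = a then wordCoeff [] b else 0 := by
  have : wordCoeff [a] ∘ₗ LinearMap.mulRight ℂ (gen θ i) =
      (if i = a then 1 else 0 : ℂ) • wordCoeff [] :=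
    linearMap_ext_wordElem fun w => by
      rw [LinearMap.comp_apply, LinearMap.mulRight_apply, ← wordElem_singleton, ← wordElem_append]
      cases w <;> simp [wordCoeff_wordElem, -wordElem_cons, -ite_smul]
  simpa [-ite_smul] using LinearMap.congr_fun this b

end Words

section Grading

variable {θ : ℕ}

theorem gen_mem_homogTot (i : Fin θ) : gen θ i ∈ homogTot θ 1 :=
  Submodule.subset_span ⟨[i], rfl, (wordElem_singleton i).symm⟩

theorem wordCoeff_eq_zero_of_mem_homogTot {n : ℕ} {x : TV θ} (hx : x ∈ homogTot θ n)
    {w : List (Fin θ)} (hw : w.length ≠ n) : wordCoeff w x = 0 := by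
  suffices homogTot θ n ≤ LinearMap.ker (wordCoeff w) from this hx
  refine span_wordElem_le fun v hv => ?_
  rw [LinearMap.mem_ker, wordCoeff_wordElem, if_neg]
  rintro rfl
  exact hw hv

theorem wordElem_mem_homogD (w : List (Fin θ)) : wordElem θ w ∈ homogD θ (degW θ w) :=
  Submodule.subset_span ⟨w, rfl, rfl⟩

theorem gen_mem_homogD (i : Fin θ) : gen θ i ∈ homogD θ (δ θ i) := by
  simpa using wordElem_mem_homogD [i]

theorem mul_mem_homogD {a b : Fin θ → ℕ} {x y : TV θ} (hx : x ∈ homogD θ a)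
    (hy : y ∈ homogD θ b) : x * y ∈ homogD θ (a + b) := by
  have h : homogD θ a * homogD θ b ≤ homogD θ (a + b) := by
    rw [homogD, homogD, Submodule.span_mul_span]
    refine Submodule.span_le.2 ?_
    rintro _ ⟨_, ⟨v, rfl, rfl⟩, _, ⟨w, rfl, rfl⟩, rfl⟩
    exact Submodule.subset_span ⟨v ++ w, degW_append v w, (wordElem_append v w).symm⟩
  exact h (Submodule.mul_mem_mul hx hy)

theorem homogD_le_homogTot (d : Fin θ → ℕ) : homogD θ d ≤ homogTot θ (∑ i, d i) :=
  span_wordElem_le fun w hw => Submodule.subset_span ⟨w, by rw [← hw, sum_degW], rfl⟩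

/-- The projection of `T(V)` onto its component of total degree `n`. -/
def homogProj (n : ℕ) : TV θ →ₗ[ℂ] TV θ :=
  (wordBasis θ).constr ℂ fun w => if w.length = n then wordElem θ w else 0

theorem homogProj_wordElem (n : ℕ) (w : List (Fin θ)) :
    homogProj n (wordElem θ w) = if w.length = n then wordElem θ w else 0 := by
  rw [homogProj, ← wordBasis_apply, Module.Basis.constr_basis, wordBasis_apply]

theorem homogProj_mem_homogTot (n : ℕ) (x : TV θ) : homogProj n x ∈ homogTot θ n := by
  refine mem_of_forall_wordElem_mem (p := (homogTot θ n).comap (homogProj n)) (fun w => ?_) x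
  rw [Submodule.mem_comap, homogProj_wordElem]
  split_ifs with h
  · exact Submodule.subset_span ⟨w, h, rfl⟩
  · exact Submodule.zero_mem _

theorem eventually_sum_homogProj_eq (x : TV θ) :
    ∀ᶠ N in Filter.atTop, ∑ n ∈ Finset.range N, homogProj n x = x := by
  have hx : x ∈ Submodule.span ℂ (Set.range (wordElem θ)) :=
    span_range_wordElem ▸ Submodule.mem_top
  induction hx using Submodule.span_induction with
  | mem x hx =>
    obtain ⟨w, rfl⟩ := hx
    filter_upwards [Filter.eventually_gt_atTop w.length] with N hN
    simp [homogProj_wordElem, hN]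
  | zero => simp
  | add x y _ _ hx hy =>
    filter_upwards [hx, hy] with N hx hy
    simp [Finset.sum_add_distrib, hx, hy]
  | smul c x _ hx =>
    filter_upwards [hx] with N hx
    simp [← Finset.smul_sum, hx]

theorem mem_of_forall_homogProj_mem {p : Submodule ℂ (TV θ)} {x : TV θ}
    (h : ∀ n, homogProj n x ∈ p) : x ∈ p := by
  obtain ⟨N, hN⟩ := (eventually_sum_homogProj_eq x).exists
  rw [← hN]
  exact Submodule.sum_mem _ fun n _ => h n

theorem wordElem_mem_Wfil {w : List (Fin θ)} {n : ℕ} (h : w.length ≤ n) :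
    wordElem θ w ∈ Wfil θ n :=
  Submodule.subset_span ⟨w, h, rfl⟩

theorem Wfil_mono : Monotone (Wfil θ) := fun _ _ hmn =>
  span_wordElem_le fun _ hw => wordElem_mem_Wfil (hw.trans hmn)

instance (n : ℕ) : FiniteDimensional ℂ (Wfil θ n) := by
  refine FiniteDimensional.span_of_finite ℂ
    (((List.finite_length_le (Fin θ) n).image (wordElem θ)).subset ?_)
  rintro _ ⟨w, hw, rfl⟩
  exact ⟨w, hw, rfl⟩

theorem mul_mem_Wfil {m n : ℕ} {x y : TV θ} (hx : x ∈ Wfil θ m) (hy : y ∈ Wfil θ n) :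
    x * y ∈ Wfil θ (m + n) := by
  have h : Wfil θ m * Wfil θ n ≤ Wfil θ (m + n) := by
    rw [Wfil, Wfil, Submodule.span_mul_span]
    refine Submodule.span_le.2 ?_
    rintro _ ⟨_, ⟨v, hv, rfl⟩, _, ⟨w, hw, rfl⟩, rfl⟩
    simp only [← wordElem_append]
    exact wordElem_mem_Wfil (by simpa using add_le_add hv hw)
  exact h (Submodule.mul_mem_mul hx hy)

theorem homogD_le_Wfil {d : Fin θ → ℕ} {n : ℕ} (h : ∑ i, d i ≤ n) : homogD θ d ≤ Wfil θ n :=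
  span_wordElem_le fun w hw => wordElem_mem_Wfil (by rwa [← sum_degW, hw])

theorem eq_smul_one_of_mem_Wfil_zero {x : TV θ} (hx : x ∈ Wfil θ 0) :
    x = wordCoeff [] x • (1 : TV θ) := by
  suffices Wfil θ 0 ≤ LinearMap.eqLocus LinearMap.id ((wordCoeff []).smulRight (1 : TV θ)) from
    this hx
  refine span_wordElem_le fun w hw => ?_
  simp [List.length_eq_zero_iff.1 (Nat.le_zero.1 hw), LinearMap.mem_eqLocus]

theorem sub_homogProj_mem_Wfil {n : ℕ} {x : TV θ} (hx : x ∈ Wfil θ (n + 1)) :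
    x - homogProj (n + 1) x ∈ Wfil θ n := by
  suffices Wfil θ (n + 1) ≤ (Wfil θ n).comap (LinearMap.id - homogProj (n + 1)) from this hx
  refine span_wordElem_le fun w hw => ?_
  rw [Submodule.mem_comap, LinearMap.sub_apply, LinearMap.id_apply, homogProj_wordElem]
  split_ifs with h
  · rw [sub_self]; exact Submodule.zero_mem _
  · rw [sub_zero]; exact wordElem_mem_Wfil (by omega)

end Grading

section Twists

variable {θ : ℕ} (q : Fin θ → Fin θ → ℂˣ)

theorem qf_add_left (a b c : Fin θ → ℕ) : qf q (a + b) c = qf q a c * qf q b c := by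
  simp [qf, add_mul, pow_add, Finset.prod_mul_distrib]

theorem qf_add_right (a b c : Fin θ → ℕ) : qf q a (b + c) = qf q a b * qf q a c := by
  simp [qf, mul_add, pow_add, Finset.prod_mul_distrib]

@[simp]
theorem qf_zero_left (a : Fin θ → ℕ) : qf q 0 a = 1 := by
  simp [qf]

@[simp]
theorem qf_zero_right (a : Fin θ → ℕ) : qf q a 0 = 1 := by
  simp [qf]

@[simp]
theorem qf_δ (i j : Fin θ) : qf q (δ θ i) (δ θ j) = q i j := by
  unfold qf δ
  rw [Finset.prod_eq_single i, Finset.prod_eq_single j] <;> simp +contextual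

theorem qf_ne_zero (a b : Fin θ → ℕ) : qf q a b ≠ 0 :=
  Finset.prod_ne_zero_iff.2 fun i _ => Finset.prod_ne_zero_iff.2 fun j _ =>
    pow_ne_zero _ (q i j).ne_zero

/-- The algebra automorphism of `T(V)` acting on elements of degree `b` by `q(a, b)`. -/
def leftTwist (a : Fin θ → ℕ) : TV θ →ₐ[ℂ] TV θ :=
  FreeAlgebra.lift ℂ fun j => qf q a (δ θ j) • gen θ j

/-- The algebra automorphism of `T(V)` acting on elements of degree `b` by `q(b, a)`. -/
def rightTwist (a : Fin θ → ℕ) : TV θ →ₐ[ℂ] TV θ :=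
  FreeAlgebra.lift ℂ fun j => qf q (δ θ j) a • gen θ j

@[simp]
theorem leftTwist_gen (a : Fin θ → ℕ) (j : Fin θ) :
    leftTwist q a (gen θ j) = qf q a (δ θ j) • gen θ j := by
  simp [leftTwist]

@[simp]
theorem rightTwist_gen (a : Fin θ → ℕ) (j : Fin θ) :
    rightTwist q a (gen θ j) = qf q (δ θ j) a • gen θ j := by
  simp [rightTwist]

theorem leftTwist_wordElem (a : Fin θ → ℕ) (w : List (Fin θ)) :
    leftTwist q a (wordElem θ w) = qf q a (degW θ w) • wordElem θ w := by
  induction w with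
  | nil => simp
  | cons i w ih => simp [ih, qf_add_right, smul_smul, mul_comm]

theorem rightTwist_wordElem (a : Fin θ → ℕ) (w : List (Fin θ)) :
    rightTwist q a (wordElem θ w) = qf q (degW θ w) a • wordElem θ w := by
  induction w with
  | nil => simp
  | cons i w ih => simp [ih, qf_add_left, smul_smul, mul_comm]

theorem leftTwist_add (a b : Fin θ → ℕ) :
    leftTwist q (a + b) = (leftTwist q a).comp (leftTwist q b) :=
  algHom_ext_gen fun i => by simp [qf_add_left, smul_smul, mul_comm]

theorem rightTwist_add (a b : Fin θ → ℕ) :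
    rightTwist q (a + b) = (rightTwist q a).comp (rightTwist q b) :=
  algHom_ext_gen fun i => by simp [qf_add_right, smul_smul, mul_comm]

@[simp]
theorem leftTwist_zero : leftTwist q 0 = AlgHom.id ℂ (TV θ) :=
  algHom_ext_gen fun i => by simp

@[simp]
theorem rightTwist_zero : rightTwist q 0 = AlgHom.id ℂ (TV θ) :=
  algHom_ext_gen fun i => by simp

theorem leftTwist_of_mem_homogD {e : Fin θ → ℕ} {y : TV θ} (hy : y ∈ homogD θ e)
    (c : Fin θ → ℕ) : leftTwist q c y = qf q c e • y := by
  suffices homogD θ e ≤ LinearMap.eqLocus (leftTwist q c).toLinearMap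
    (qf q c e • LinearMap.id) from this hy
  refine span_wordElem_le fun w hw => ?_
  simp [LinearMap.mem_eqLocus, leftTwist_wordElem, hw]

theorem rightTwist_of_mem_homogD {e : Fin θ → ℕ} {y : TV θ} (hy : y ∈ homogD θ e)
    (c : Fin θ → ℕ) : rightTwist q c y = qf q e c • y := by
  suffices homogD θ e ≤ LinearMap.eqLocus (rightTwist q c).toLinearMap
    (qf q e c • LinearMap.id) from this hy
  refine span_wordElem_le fun w hw => ?_
  simp [LinearMap.mem_eqLocus, rightTwist_wordElem, hw]

theorem wordCoeff_leftTwist (w : List (Fin θ)) (c : Fin θ → ℕ) :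
    wordCoeff w ∘ₗ (leftTwist q c).toLinearMap = qf q c (degW θ w) • wordCoeff w :=
  linearMap_ext_wordElem fun v => by
    simp only [LinearMap.comp_apply, AlgHom.toLinearMap_apply, leftTwist_wordElem, map_smul,
      LinearMap.smul_apply, wordCoeff_wordElem]
    split_ifs with h <;> simp [h]

@[simp]
theorem wordCoeff_nil_leftTwist (c : Fin θ → ℕ) (x : TV θ) :
    wordCoeff [] (leftTwist q c x) = wordCoeff [] x := by
  simpa using LinearMap.congr_fun (wordCoeff_leftTwist q [] c) x

end Twists

section GeneratorCoproduct

variable {θ : ℕ} (q : Fin θ → Fin θ → ℂˣ)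

/-- Left multiplication by `Δ(x_i)` on the braided tensor product `T(V) ⊗ T(V)`. -/
def mulLeftΔ (i : Fin θ) : TV θ ⊗[ℂ] TV θ →ₗ[ℂ] TV θ ⊗[ℂ] TV θ :=
  (LinearMap.mulLeft ℂ (gen θ i)).rTensor (TV θ) +
    TensorProduct.map (leftTwist q (δ θ i)).toLinearMap (LinearMap.mulLeft ℂ (gen θ i))

/-- Right multiplication by `Δ(x_i)` on the braided tensor product `T(V) ⊗ T(V)`. -/
def mulRightΔ (i : Fin θ) : TV θ ⊗[ℂ] TV θ →ₗ[ℂ] TV θ ⊗[ℂ] TV θ :=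
  TensorProduct.map (LinearMap.mulRight ℂ (gen θ i)) (rightTwist q (δ θ i)).toLinearMap +
    (LinearMap.mulRight ℂ (gen θ i)).lTensor (TV θ)

@[simp]
theorem mulLeftΔ_tmul (i : Fin θ) (a b : TV θ) :
    mulLeftΔ q i (a ⊗ₜ b) =
      (gen θ i * a) ⊗ₜ b + leftTwist q (δ θ i) a ⊗ₜ (gen θ i * b) := by
  simp [mulLeftΔ]

@[simp]
theorem mulRightΔ_tmul (i : Fin θ) (a b : TV θ) :
    mulRightΔ q i (a ⊗ₜ b) =
      (a * gen θ i) ⊗ₜ rightTwist q (δ θ i) b + a ⊗ₜ (b * gen θ i) := by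
  simp [mulRightΔ]

theorem rightSlice_wordCoeff_nil_mulLeftΔ (i : Fin θ) (X : TV θ ⊗[ℂ] TV θ) :
    rightSlice (wordCoeff []) (mulLeftΔ q i X) = gen θ i * rightSlice (wordCoeff []) X := by
  induction X with
  | zero => simp
  | tmul a b => simp
  | add X Y hX hY => simp only [map_add, hX, hY, mul_add]

theorem leftSlice_wordCoeff_nil_mulLeftΔ (i : Fin θ) (X : TV θ ⊗[ℂ] TV θ) :
    leftSlice (wordCoeff []) (mulLeftΔ q i X) = gen θ i * leftSlice (wordCoeff []) X := by
  induction X with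
  | zero => simp
  | tmul a b => simp
  | add X Y hX hY => simp only [map_add, hX, hY, mul_add]

theorem rightSlice_wordCoeff_singleton_mulLeftΔ (a i : Fin θ) (X : TV θ ⊗[ℂ] TV θ) :
    rightSlice (wordCoeff [a]) (mulLeftΔ q i X) = gen θ i * rightSlice (wordCoeff [a]) X +
      if i = a then leftTwist q (δ θ i) (rightSlice (wordCoeff []) X) else 0 := by
  induction X with
  | zero => simp
  | tmul c d => split_ifs with h <;> simp [wordCoeff_singleton_gen_mul, h]
  | add X Y hX hY =>
    simp only [map_add, hX, hY, mul_add]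
    split_ifs <;> abel

theorem leftSlice_wordCoeff_singleton_mulRightΔ (a i : Fin θ) (X : TV θ ⊗[ℂ] TV θ) :
    leftSlice (wordCoeff [a]) (mulRightΔ q i X) = leftSlice (wordCoeff [a]) X * gen θ i +
      if i = a then rightTwist q (δ θ i) (leftSlice (wordCoeff []) X) else 0 := by
  induction X with
  | zero => simp
  | tmul c d => split_ifs with h <;> simp [wordCoeff_singleton_mul_gen, h, add_comm]
  | add X Y hX hY =>
    simp only [map_add, hX, hY, add_mul]
    split_ifs <;> abel

end GeneratorCoproduct

section Existence

variable {θ : ℕ} (q : Fin θ → Fin θ → ℂˣ)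

/-- The braiding `x ⊗ y ↦ q(deg x, deg y) y ⊗ x` of `T(V)`, for homogeneous `x` and `y`. -/
def braiding : TV θ ⊗[ℂ] TV θ →ₗ[ℂ] TV θ ⊗[ℂ] TV θ :=
  TensorProduct.lift ((wordBasis θ).constr ℂ fun w =>
    (TensorProduct.mk ℂ (TV θ) (TV θ)).flip (wordElem θ w) ∘ₗ
      (leftTwist q (degW θ w)).toLinearMap)

theorem braiding_wordElem_tmul (w : List (Fin θ)) (c : TV θ) :
    braiding q (wordElem θ w ⊗ₜ c) = leftTwist q (degW θ w) c ⊗ₜ wordElem θ w := by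
  rw [braiding, TensorProduct.lift.tmul, ← wordBasis_apply w, Module.Basis.constr_basis]
  simp

/-- The multiplication of the braided tensor product `T(V) ⊗ T(V)`. -/
def braidedMul : TV θ ⊗[ℂ] TV θ →ₗ[ℂ] TV θ ⊗[ℂ] TV θ →ₗ[ℂ] TV θ ⊗[ℂ] TV θ :=
  TensorProduct.curry
    (TensorProduct.map (LinearMap.mul' ℂ (TV θ)) (LinearMap.mul' ℂ (TV θ)) ∘ₗ
      (TensorProduct.assoc ℂ (TV θ) (TV θ) (TV θ ⊗[ℂ] TV θ)).symm.toLinearMap ∘ₗ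
      ((TensorProduct.assoc ℂ (TV θ) (TV θ) (TV θ)).toLinearMap ∘ₗ
          (braiding q).rTensor (TV θ) ∘ₗ
          (TensorProduct.assoc ℂ (TV θ) (TV θ) (TV θ)).symm.toLinearMap).lTensor (TV θ) ∘ₗ
      (TensorProduct.assoc ℂ (TV θ) (TV θ) (TV θ ⊗[ℂ] TV θ)).toLinearMap)

theorem braidedMul_tmul_wordElem (w : List (Fin θ)) (a c d : TV θ) :
    braidedMul q (a ⊗ₜ wordElem θ w) (c ⊗ₜ d) =
      (a * leftTwist q (degW θ w) c) ⊗ₜ (wordElem θ w * d) := by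
  simp [braidedMul, braiding_wordElem_tmul]

theorem mulLeftΔ_braidedMul (i : Fin θ) (X Y : TV θ ⊗[ℂ] TV θ) :
    mulLeftΔ q i (braidedMul q X Y) = braidedMul q (mulLeftΔ q i X) Y := by
  have : (braidedMul q).compr₂ (mulLeftΔ q i) = braidedMul q ∘ₗ mulLeftΔ q i := by
    refine TensorProduct.ext (LinearMap.ext fun a => linearMap_ext_wordElem fun w =>
      TensorProduct.ext' fun c d => ?_)
    simp only [LinearMap.compr₂_apply, LinearMap.compr₂ₛₗ_apply, LinearMap.comp_apply,
      TensorProduct.mk_apply, braidedMul_tmul_wordElem, mulLeftΔ_tmul, map_add,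
      LinearMap.add_apply, map_mul, ← wordElem_cons, degW_cons, leftTwist_add, AlgHom.comp_apply]
    simp [mul_assoc]
  exact LinearMap.congr_fun₂ this X Y

/-- The action of `T(V)` on `T(V) ⊗ T(V)` through the coproduct. -/
def coproductAction : TV θ →ₐ[ℂ] Module.End ℂ (TV θ ⊗[ℂ] TV θ) :=
  FreeAlgebra.lift ℂ (mulLeftΔ q)

@[simp]
theorem coproductAction_gen (i : Fin θ) : coproductAction q (gen θ i) = mulLeftΔ q i := by
  simp [coproductAction]

theorem coproductAction_apply (u : TV θ) (Y : TV θ ⊗[ℂ] TV θ) :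
    coproductAction q u Y = braidedMul q (coproductAction q u (1 ⊗ₜ 1)) Y := by
  suffices ∀ w, coproductAction q (wordElem θ w) =
      braidedMul q (coproductAction q (wordElem θ w) (1 ⊗ₜ 1)) by
    have h : (coproductAction q).toLinearMap =
        braidedMul q ∘ₗ LinearMap.applyₗ (1 ⊗ₜ[ℂ] 1) ∘ₗ (coproductAction q).toLinearMap :=
      linearMap_ext_wordElem this
    exact LinearMap.congr_fun (LinearMap.congr_fun h u) Y
  intro w
  induction w with
  | nil =>
    refine TensorProduct.ext' fun a b => ?_
    simpa using (braidedMul_tmul_wordElem q [] 1 a b).symm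
  | cons i w ih =>
    refine LinearMap.ext fun Z => ?_
    simp only [wordElem_cons, map_mul, coproductAction_gen, Module.End.mul_apply,
      ← mulLeftΔ_braidedMul, ← LinearMap.congr_fun ih Z]

/-- The braided bialgebra structure of `T(V)`. -/
def braidedStr : BraidedStr θ q where
  Δ := LinearMap.applyₗ (1 ⊗ₜ[ℂ] 1) ∘ₗ (coproductAction q).toLinearMap
  mulB := braidedMul q
  mulB_spec a d wb wc := by
    simp [braidedMul_tmul_wordElem, leftTwist_wordElem, TensorProduct.smul_tmul']
  Δ_one := by simp
  Δ_gen i := by simp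
  Δ_mul u v := by
    simp only [LinearMap.comp_apply, AlgHom.toLinearMap_apply, LinearMap.applyₗ_apply_apply,
      map_mul, Module.End.mul_apply]
    exact coproductAction_apply q u _

end Existence

section Coproduct

variable {θ : ℕ} {q : Fin θ → Fin θ → ℂˣ} (S : BraidedStr θ q)

theorem mulB_tmul_wordElem (w : List (Fin θ)) (a c d : TV θ) :
    S.mulB (a ⊗ₜ wordElem θ w) (c ⊗ₜ d) =
      (a * leftTwist q (degW θ w) c) ⊗ₜ (wordElem θ w * d) := by
  have : (S.mulB (a ⊗ₜ wordElem θ w)) ∘ₗ (TensorProduct.mk ℂ (TV θ) (TV θ)).flip d =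
      (TensorProduct.mk ℂ (TV θ) (TV θ)).flip (wordElem θ w * d) ∘ₗ
        LinearMap.mulLeft ℂ a ∘ₗ (leftTwist q (degW θ w)).toLinearMap :=
    linearMap_ext_wordElem fun v => by
      simp [S.mulB_spec, leftTwist_wordElem, TensorProduct.smul_tmul']
  simpa using LinearMap.congr_fun this c

theorem mulB_wordElem_tmul (w : List (Fin θ)) (a b d : TV θ) :
    S.mulB (a ⊗ₜ b) (wordElem θ w ⊗ₜ d) =
      (a * wordElem θ w) ⊗ₜ (rightTwist q (degW θ w) b * d) := by
  have : (S.mulB.flip (wordElem θ w ⊗ₜ d)) ∘ₗ TensorProduct.mk ℂ (TV θ) (TV θ) a =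
      TensorProduct.mk ℂ (TV θ) (TV θ) (a * wordElem θ w) ∘ₗ
        LinearMap.mulRight ℂ d ∘ₗ (rightTwist q (degW θ w)).toLinearMap :=
    linearMap_ext_wordElem fun v => by simp [S.mulB_spec, rightTwist_wordElem]
  simpa using LinearMap.congr_fun this b

theorem mulB_primitive_left {e : Fin θ → ℕ} {y : TV θ} (hy : y ∈ homogD θ e) (c d : TV θ) :
    S.mulB (y ⊗ₜ 1 + 1 ⊗ₜ y) (c ⊗ₜ d) = (y * c) ⊗ₜ d + leftTwist q e c ⊗ₜ (y * d) := by
  have h : homogD θ e ≤ LinearMap.eqLocus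
      (S.mulB.flip (c ⊗ₜ d) ∘ₗ TensorProduct.mk ℂ (TV θ) (TV θ) 1)
      (TensorProduct.mk ℂ (TV θ) (TV θ) (leftTwist q e c) ∘ₗ LinearMap.mulRight ℂ d) :=
    span_wordElem_le fun w hw => by simp [LinearMap.mem_eqLocus, mulB_tmul_wordElem, hw]
  have h1 : S.mulB (1 ⊗ₜ y) (c ⊗ₜ d) = leftTwist q e c ⊗ₜ (y * d) := h hy
  have h2 := mulB_tmul_wordElem S [] y c d
  simp only [wordElem_nil, degW_nil, leftTwist_zero, one_mul, AlgHom.id_apply] at h2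
  rw [map_add, LinearMap.add_apply, h1, h2]

theorem Δ_gen_mul (i : Fin θ) (b : TV θ) : S.Δ (gen θ i * b) = mulLeftΔ q i (S.Δ b) := by
  rw [S.Δ_mul, S.Δ_gen]
  induction S.Δ b with
  | zero => simp
  | tmul c d => rw [mulB_primitive_left S (gen_mem_homogD i), mulLeftΔ_tmul]
  | add X Y hX hY => rw [map_add, hX, hY, map_add]

theorem Δ_mul_gen (i : Fin θ) (b : TV θ) : S.Δ (b * gen θ i) = mulRightΔ q i (S.Δ b) := by
  rw [S.Δ_mul, S.Δ_gen]
  induction S.Δ b with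
  | zero => simp
  | tmul c d =>
    have h1 := mulB_wordElem_tmul S [i] c d 1
    have h2 := mulB_wordElem_tmul S [] c d (gen θ i)
    simp only [wordElem_nil, degW_nil, rightTwist_zero, AlgHom.id_apply, mul_one,
      wordElem_singleton, degW_cons, add_zero] at h1 h2
    rw [map_add, h1, h2, mulRightΔ_tmul]
  | add X Y hX hY => rw [map_add S.mulB, LinearMap.add_apply, hX, hY, map_add]

theorem rightSlice_wordCoeff_nil_Δ (x : TV θ) : rightSlice (wordCoeff []) (S.Δ x) = x := by
  have : rightSlice (wordCoeff []) ∘ₗ S.Δ = LinearMap.id := linearMap_ext_wordElem fun w => by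
    simp only [LinearMap.comp_apply, LinearMap.id_apply]
    induction w with
    | nil => simp [S.Δ_one, wordCoeff_one]
    | cons i w ih => rw [wordElem_cons, Δ_gen_mul, rightSlice_wordCoeff_nil_mulLeftΔ, ih]
  exact LinearMap.congr_fun this x

theorem leftSlice_wordCoeff_nil_Δ (x : TV θ) : leftSlice (wordCoeff []) (S.Δ x) = x := by
  have : leftSlice (wordCoeff []) ∘ₗ S.Δ = LinearMap.id := linearMap_ext_wordElem fun w => by
    simp only [LinearMap.comp_apply, LinearMap.id_apply]
    induction w with
    | nil => simp [S.Δ_one, wordCoeff_one]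
    | cons i w ih => rw [wordElem_cons, Δ_gen_mul, leftSlice_wordCoeff_nil_mulLeftΔ, ih]
  exact LinearMap.congr_fun this x

theorem Δ_wordElem_mem {w : List (Fin θ)} {p : Submodule ℂ (TV θ ⊗[ℂ] TV θ)}
    (h : ∀ u v : List (Fin θ), u.length + v.length = w.length →
      wordElem θ u ⊗ₜ wordElem θ v ∈ p) : S.Δ (wordElem θ w) ∈ p := by
  induction w generalizing p with
  | nil => simpa [S.Δ_one] using h [] [] rfl
  | cons i w ih =>
    rw [wordElem_cons, Δ_gen_mul, ← Submodule.mem_comap]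
    refine ih fun u v huv => ?_
    rw [Submodule.mem_comap, mulLeftΔ_tmul, leftTwist_wordElem, ← wordElem_cons, ← wordElem_cons,
      ← TensorProduct.smul_tmul']
    refine p.add_mem (h _ _ ?_) (p.smul_mem _ (h _ _ ?_)) <;> simp only [List.length_cons] <;> omega

end Coproduct

section PreNicholsIdeals

variable {θ : ℕ} {q : Fin θ → Fin θ → ℂˣ} {S : BraidedStr θ q} {I : Submodule ℂ (TV θ)}

theorem tmul_mem_mixedSub_left {a : TV θ} (ha : a ∈ I) (b : TV θ) : a ⊗ₜ[ℂ] b ∈ mixedSub I :=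
  Submodule.subset_span (Or.inl ⟨a, b, ha, rfl⟩)

theorem tmul_mem_mixedSub_right (a : TV θ) {b : TV θ} (hb : b ∈ I) : a ⊗ₜ[ℂ] b ∈ mixedSub I :=
  Submodule.subset_span (Or.inr ⟨a, b, hb, rfl⟩)

theorem mixedSub_le {p : Submodule ℂ (TV θ ⊗[ℂ] TV θ)}
    (h : ∀ a b : TV θ, a ∈ I ∨ b ∈ I → a ⊗ₜ[ℂ] b ∈ p) : mixedSub I ≤ p := by
  refine Submodule.span_le.2 ?_
  rintro _ (⟨a, b, ha, rfl⟩ | ⟨a, b, hb, rfl⟩)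
  · exact h a b (Or.inl ha)
  · exact h a b (Or.inr hb)

theorem mem_mixedSub_of_map_mkQ_eq_zero {X : TV θ ⊗[ℂ] TV θ}
    (hX : TensorProduct.map I.mkQ I.mkQ X = 0) : X ∈ mixedSub I := by
  rw [← LinearMap.mem_ker, TensorProduct.map_ker (LinearMap.exact_subtype_mkQ I)
    I.mkQ_surjective (LinearMap.exact_subtype_mkQ I) I.mkQ_surjective] at hX
  refine (sup_le ?_ ?_ : _ ≤ mixedSub I) hX
  · rintro _ ⟨Z, rfl⟩
    induction Z with
    | zero => simp
    | tmul a b => exact tmul_mem_mixedSub_right a b.2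
    | add X Y hX hY => rw [map_add]; exact Submodule.add_mem _ hX hY
  · rintro _ ⟨Z, rfl⟩
    induction Z with
    | zero => simp
    | tmul a b => exact tmul_mem_mixedSub_left a.2 b
    | add X Y hX hY => rw [map_add]; exact Submodule.add_mem _ hX hY

theorem rightSlice_mem {η : TV θ →ₗ[ℂ] ℂ} (hη : ∀ x ∈ I, η x = 0) {X : TV θ ⊗[ℂ] TV θ}
    (hX : X ∈ mixedSub I) : rightSlice η X ∈ I := by
  suffices mixedSub I ≤ I.comap (rightSlice η) from this hX
  refine mixedSub_le fun a b h => ?_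
  rw [Submodule.mem_comap, rightSlice_tmul]
  rcases h with h | h
  · exact I.smul_mem _ h
  · simp [hη b h]

theorem leftSlice_mem {η : TV θ →ₗ[ℂ] ℂ} (hη : ∀ x ∈ I, η x = 0) {X : TV θ ⊗[ℂ] TV θ}
    (hX : X ∈ mixedSub I) : leftSlice η X ∈ I := by
  suffices mixedSub I ≤ I.comap (leftSlice η) from this hX
  refine mixedSub_le fun a b h => ?_
  rw [Submodule.mem_comap, leftSlice_tmul]
  rcases h with h | h
  · simp [hη a h]
  · exact I.smul_mem _ h

/-- `y` becomes a primitive element of the quotient `T(V)/I`. -/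
def IsPrimitiveMod (S : BraidedStr θ q) (I : Submodule ℂ (TV θ)) (y : TV θ) : Prop :=
  S.Δ y - (y ⊗ₜ 1 + 1 ⊗ₜ y) ∈ mixedSub I

namespace IsPreNicholsIdeal

theorem wordCoeff_eq_zero (hI : IsPreNicholsIdeal S I) {w : List (Fin θ)} (hw : w.length < 2)
    (x : TV θ) (hx : x ∈ I) : wordCoeff w x = 0 := by
  suffices I ≤ LinearMap.ker (wordCoeff w) from this hx
  rw [hI.homog_ge2]
  refine Submodule.span_le.2 ?_
  rintro y ⟨-, n, hn, hy⟩
  exact wordCoeff_eq_zero_of_mem_homogTot hy (by omega)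

theorem leftTwist_δ_mem (hI : IsPreNicholsIdeal S I) (i : Fin θ) {x : TV θ} (hx : x ∈ I) :
    leftTwist q (δ θ i) x ∈ I := by
  have h1 := rightSlice_mem (hI.wordCoeff_eq_zero (w := [i]) (by simp))
    (hI.coideal _ (hI.mul_left (gen θ i) x hx))
  have h2 := rightSlice_mem (hI.wordCoeff_eq_zero (w := [i]) (by simp)) (hI.coideal x hx)
  rw [Δ_gen_mul, rightSlice_wordCoeff_singleton_mulLeftΔ, if_pos rfl,
    rightSlice_wordCoeff_nil_Δ] at h1
  exact (I.add_mem_iff_right (hI.mul_left _ _ h2)).1 h1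

theorem rightTwist_δ_mem (hI : IsPreNicholsIdeal S I) (i : Fin θ) {x : TV θ} (hx : x ∈ I) :
    rightTwist q (δ θ i) x ∈ I := by
  have h1 := leftSlice_mem (hI.wordCoeff_eq_zero (w := [i]) (by simp))
    (hI.coideal _ (hI.mul_right (gen θ i) x hx))
  have h2 := leftSlice_mem (hI.wordCoeff_eq_zero (w := [i]) (by simp)) (hI.coideal x hx)
  rw [Δ_mul_gen, leftSlice_wordCoeff_singleton_mulRightΔ, if_pos rfl,
    leftSlice_wordCoeff_nil_Δ] at h1
  exact (I.add_mem_iff_right (hI.mul_right _ _ h2)).1 h1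

theorem leftTwist_mem (hI : IsPreNicholsIdeal S I) (w : List (Fin θ)) {x : TV θ} (hx : x ∈ I) :
    leftTwist q (degW θ w) x ∈ I := by
  induction w with
  | nil => simpa using hx
  | cons i w ih => rw [degW_cons, leftTwist_add]; exact hI.leftTwist_δ_mem i ih

theorem rightTwist_mem (hI : IsPreNicholsIdeal S I) (w : List (Fin θ)) {x : TV θ} (hx : x ∈ I) :
    rightTwist q (degW θ w) x ∈ I := by
  induction w with
  | nil => simpa using hx
  | cons i w ih => rw [degW_cons, rightTwist_add]; exact hI.rightTwist_δ_mem i ih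

theorem mulB_mem_right (hI : IsPreNicholsIdeal S I) (X : TV θ ⊗[ℂ] TV θ) {Y : TV θ ⊗[ℂ] TV θ}
    (hY : Y ∈ mixedSub I) : S.mulB X Y ∈ mixedSub I := by
  suffices mixedSub I ≤ (mixedSub I).comap (S.mulB X) from this hY
  refine mixedSub_le fun c d h => ?_
  rw [Submodule.mem_comap]
  induction X with
  | zero => simp
  | add X X' hX hX' => rw [map_add]; exact Submodule.add_mem _ hX hX'
  | tmul a b =>
    refine mem_of_forall_wordElem_mem (p := (mixedSub I).comap
      (S.mulB.flip (c ⊗ₜ d) ∘ₗ TensorProduct.mk ℂ (TV θ) (TV θ) a)) (fun w => ?_) b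
    simp only [Submodule.mem_comap, LinearMap.comp_apply, TensorProduct.mk_apply,
      LinearMap.flip_apply, mulB_tmul_wordElem]
    rcases h with h | h
    · exact tmul_mem_mixedSub_left (hI.mul_left _ _ (hI.leftTwist_mem w h)) _
    · exact tmul_mem_mixedSub_right _ (hI.mul_left _ _ h)

theorem mulB_mem_left (hI : IsPreNicholsIdeal S I) {X : TV θ ⊗[ℂ] TV θ} (hX : X ∈ mixedSub I)
    (Y : TV θ ⊗[ℂ] TV θ) : S.mulB X Y ∈ mixedSub I := by
  suffices mixedSub I ≤ (mixedSub I).comap (S.mulB.flip Y) from this hX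
  refine mixedSub_le fun a b h => ?_
  rw [Submodule.mem_comap, LinearMap.flip_apply]
  induction Y with
  | zero => simp
  | add Y Y' hY hY' => rw [map_add]; exact Submodule.add_mem _ hY hY'
  | tmul c d =>
    refine mem_of_forall_wordElem_mem (p := (mixedSub I).comap
      (S.mulB (a ⊗ₜ b) ∘ₗ (TensorProduct.mk ℂ (TV θ) (TV θ)).flip d)) (fun w => ?_) c
    simp only [Submodule.mem_comap, LinearMap.comp_apply, TensorProduct.mk_apply,
      LinearMap.flip_apply, mulB_wordElem_tmul]
    rcases h with h | h
    · exact tmul_mem_mixedSub_left (hI.mul_right _ _ h) _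
    · exact tmul_mem_mixedSub_right _ (hI.mul_right _ _ (hI.rightTwist_mem w h))

end IsPreNicholsIdeal

end PreNicholsIdeals

section SkewDerivations

variable {θ : ℕ} {q : Fin θ → Fin θ → ℂˣ} (S : BraidedStr θ q)

/-- The skew derivation `∂_a` of `T(V)` dual to `x_a`: the element `∂_a(x)` is the coefficient of
`x_a` in the second tensor factor of `Δ(x)`. -/
def skewDer (a : Fin θ) : TV θ →ₗ[ℂ] TV θ := rightSlice (wordCoeff [a]) ∘ₗ S.Δ

theorem skewDer_gen_mul (a i : Fin θ) (b : TV θ) :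
    skewDer S a (gen θ i * b) =
      gen θ i * skewDer S a b + if i = a then leftTwist q (δ θ i) b else 0 := by
  simp only [skewDer, LinearMap.comp_apply, Δ_gen_mul, rightSlice_wordCoeff_singleton_mulLeftΔ,
    rightSlice_wordCoeff_nil_Δ]

theorem skewDer_one (a : Fin θ) : skewDer S a 1 = 0 := by
  simp [skewDer, S.Δ_one, wordCoeff_one]

theorem skewDer_mul (a : Fin θ) (x y : TV θ) :
    skewDer S a (x * y) = x * skewDer S a y + skewDer S a x * leftTwist q (δ θ a) y := by
  have : skewDer S a ∘ₗ LinearMap.mulRight ℂ y = LinearMap.mulRight ℂ (skewDer S a y) +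
      LinearMap.mulRight ℂ (leftTwist q (δ θ a) y) ∘ₗ skewDer S a :=
    linearMap_ext_wordElem fun w => by
      simp only [LinearMap.comp_apply, LinearMap.mulRight_apply, LinearMap.add_apply]
      induction w with
      | nil => simp [skewDer_one]
      | cons i w ih =>
        rw [wordElem_cons, mul_assoc, skewDer_gen_mul, ih, skewDer_gen_mul]
        split_ifs with h
        · subst h; simp only [map_mul]; noncomm_ring
        · noncomm_ring
  exact LinearMap.congr_fun this x

theorem map_leftTwist_mulLeftΔ (c : Fin θ → ℕ) (i : Fin θ) (X : TV θ ⊗[ℂ] TV θ) :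
    TensorProduct.map (leftTwist q c).toLinearMap (leftTwist q c).toLinearMap (mulLeftΔ q i X) =
      qf q c (δ θ i) • mulLeftΔ q i
        (TensorProduct.map (leftTwist q c).toLinearMap (leftTwist q c).toLinearMap X) := by
  induction X with
  | zero => simp
  | tmul a b =>
    have hcomm : leftTwist q c (leftTwist q (δ θ i) a) = leftTwist q (δ θ i) (leftTwist q c a) := by
      rw [← AlgHom.comp_apply, ← leftTwist_add, add_comm, leftTwist_add, AlgHom.comp_apply]
    simp only [mulLeftΔ_tmul, TensorProduct.map_tmul, map_add, AlgHom.toLinearMap_apply, map_mul,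
      leftTwist_gen, smul_mul_assoc, TensorProduct.tmul_smul, ← TensorProduct.smul_tmul', smul_add,
      hcomm]
  | add X Y hX hY => simp only [map_add, hX, hY, smul_add]

theorem Δ_leftTwist (c : Fin θ → ℕ) (x : TV θ) :
    S.Δ (leftTwist q c x) =
      TensorProduct.map (leftTwist q c).toLinearMap (leftTwist q c).toLinearMap (S.Δ x) := by
  have : S.Δ ∘ₗ (leftTwist q c).toLinearMap =
      TensorProduct.map (leftTwist q c).toLinearMap (leftTwist q c).toLinearMap ∘ₗ S.Δ :=
    linearMap_ext_wordElem fun w => by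
      simp only [LinearMap.comp_apply, AlgHom.toLinearMap_apply]
      induction w with
      | nil => simp [S.Δ_one]
      | cons i w ih =>
        rw [wordElem_cons, map_mul, leftTwist_gen, smul_mul_assoc, map_smul, Δ_gen_mul, Δ_gen_mul,
          ih, map_leftTwist_mulLeftΔ]
  exact LinearMap.congr_fun this x

theorem skewDer_leftTwist (c : Fin θ → ℕ) (a : Fin θ) (x : TV θ) :
    skewDer S a (leftTwist q c x) = qf q c (δ θ a) • leftTwist q c (skewDer S a x) := by
  simp only [skewDer, LinearMap.comp_apply, Δ_leftTwist, rightSlice_map, wordCoeff_leftTwist,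
    rightSlice_smul, map_smul, AlgHom.toLinearMap_apply, degW_cons, degW_nil, add_zero]

theorem map_skewDer_mulLeftΔ (a i : Fin θ) (X : TV θ ⊗[ℂ] TV θ) :
    TensorProduct.map LinearMap.id (skewDer S a) (mulLeftΔ q i X) =
      mulLeftΔ q i (TensorProduct.map LinearMap.id (skewDer S a) X) +
        if i = a then TensorProduct.map (leftTwist q (δ θ i)).toLinearMap
          (leftTwist q (δ θ i)).toLinearMap X else 0 := by
  induction X with
  | zero => simp
  | tmul u v =>
    simp only [mulLeftΔ_tmul, TensorProduct.map_tmul, map_add, skewDer_gen_mul]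
    split_ifs <;> simp [TensorProduct.tmul_add, add_assoc]
  | add X Y hX hY =>
    simp only [map_add, hX, hY]
    split_ifs <;> abel

theorem Δ_skewDer (a : Fin θ) (x : TV θ) :
    S.Δ (skewDer S a x) = TensorProduct.map LinearMap.id (skewDer S a) (S.Δ x) := by
  have : S.Δ ∘ₗ skewDer S a = TensorProduct.map LinearMap.id (skewDer S a) ∘ₗ S.Δ :=
    linearMap_ext_wordElem fun w => by
      simp only [LinearMap.comp_apply]
      induction w with
      | nil => simp [S.Δ_one, skewDer_one]
      | cons i w ih =>
        rw [wordElem_cons, skewDer_gen_mul, map_add, Δ_gen_mul, Δ_gen_mul, ih,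
          map_skewDer_mulLeftΔ]
        split_ifs <;> simp [Δ_leftTwist]
  exact LinearMap.congr_fun this x

/-- The functional on `T(V)` that applies the skew derivations along a word and then the counit:
the pairing of `T(V)` with words in the dual braided vector space. -/
def wordPairing : List (Fin θ) → (TV θ →ₗ[ℂ] ℂ)
  | [] => wordCoeff []
  | a :: u => wordPairing u ∘ₗ skewDer S a

theorem wordPairing_nil : wordPairing S [] = wordCoeff [] := rfl

theorem wordPairing_cons (a : Fin θ) (u : List (Fin θ)) :
    wordPairing S (a :: u) = wordPairing S u ∘ₗ skewDer S a := rfl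

theorem wordPairing_rightSlice_wordPairing (u v : List (Fin θ)) (x : TV θ) :
    wordPairing S u (rightSlice (wordPairing S v) (S.Δ x)) = wordPairing S (v ++ u) x := by
  induction v generalizing x with
  | nil => rw [wordPairing_nil, rightSlice_wordCoeff_nil_Δ, List.nil_append]
  | cons a v ih =>
    rw [List.cons_append, wordPairing_cons S a (v ++ u), LinearMap.comp_apply, ← ih, Δ_skewDer,
      rightSlice_map, wordPairing_cons, LinearMap.id_apply]

theorem wordPairing_leftTwist (c : Fin θ → ℕ) (u : List (Fin θ)) (x : TV θ) :
    wordPairing S u (leftTwist q c x) = qf q c (degW θ u) * wordPairing S u x := by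
  induction u generalizing x with
  | nil => simp [wordPairing_nil]
  | cons a u ih =>
    simp only [wordPairing_cons, LinearMap.comp_apply, skewDer_leftTwist, map_smul, ih, degW_cons,
      qf_add_right, smul_eq_mul, mul_assoc]

theorem wordPairing_wordElem_of_length_ne {u w : List (Fin θ)} (h : u.length ≠ w.length) :
    wordPairing S u (wordElem θ w) = 0 := by
  induction u generalizing w with
  | nil =>
    rw [wordPairing_nil, wordCoeff_wordElem, if_neg]
    rintro rfl
    exact h rfl
  | cons a u ih =>
    rw [← LinearMap.mem_ker]
    refine Δ_wordElem_mem S (p := LinearMap.ker (wordPairing S u ∘ₗ rightSlice (wordCoeff [a])))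
      fun v v' hv => ?_
    rw [LinearMap.mem_ker, LinearMap.comp_apply, rightSlice_tmul, wordCoeff_wordElem]
    split_ifs with hv'
    · subst hv'
      rw [one_smul]
      refine ih fun hu => h ?_
      simp [← hv, hu]
    · simp

theorem wordPairing_homogProj (u : List (Fin θ)) (n : ℕ) (x : TV θ) :
    wordPairing S u (homogProj n x) = if u.length = n then wordPairing S u x else 0 := by
  have : wordPairing S u ∘ₗ homogProj n = if u.length = n then wordPairing S u else 0 :=
    linearMap_ext_wordElem fun w => by
      rw [LinearMap.comp_apply, homogProj_wordElem]
      by_cases hw : u.length = w.length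
      · rw [hw]; split_ifs <;> simp
      · split_ifs <;> simp [wordPairing_wordElem_of_length_ne S hw]
  rw [← LinearMap.comp_apply, this]
  split_ifs <;> simp

theorem wordPairing_singleton (a : Fin θ) : wordPairing S [a] = wordCoeff [a] :=
  LinearMap.ext fun x => by
    simp only [wordPairing_cons, wordPairing_nil, LinearMap.comp_apply, skewDer, apply_rightSlice,
      leftSlice_wordCoeff_nil_Δ]

end SkewDerivations

section PairingRadical

variable {θ : ℕ} {q : Fin θ → Fin θ → ℂˣ} (S : BraidedStr θ q)

/-- The common kernel of all `wordPairing S u`, i.e. the elements of `T(V)` annihilated by all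
iterated skew derivations followed by the counit. -/
def pairingRadical : Submodule ℂ (TV θ) := ⨅ u, LinearMap.ker (wordPairing S u)

theorem mem_pairingRadical {x : TV θ} : x ∈ pairingRadical S ↔ ∀ u, wordPairing S u x = 0 := by
  simp [pairingRadical]

variable {S}

theorem skewDer_mem_pairingRadical {x : TV θ} (hx : x ∈ pairingRadical S) (a : Fin θ) :
    skewDer S a x ∈ pairingRadical S :=
  (mem_pairingRadical S).2 fun u => (mem_pairingRadical S).1 hx (a :: u)

theorem leftTwist_mem_pairingRadical {x : TV θ} (hx : x ∈ pairingRadical S) (c : Fin θ → ℕ) :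
    leftTwist q c x ∈ pairingRadical S :=
  (mem_pairingRadical S).2 fun u => by
    rw [wordPairing_leftTwist, (mem_pairingRadical S).1 hx u, mul_zero]

theorem homogProj_mem_pairingRadical {x : TV θ} (hx : x ∈ pairingRadical S) (n : ℕ) :
    homogProj n x ∈ pairingRadical S :=
  (mem_pairingRadical S).2 fun u => by
    rw [wordPairing_homogProj, (mem_pairingRadical S).1 hx u, ite_self]

theorem mul_mem_pairingRadical_left (a : TV θ) {x : TV θ} (hx : x ∈ pairingRadical S) :
    a * x ∈ pairingRadical S := by
  refine (mem_pairingRadical S).2 fun u => ?_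
  induction u generalizing a x with
  | nil =>
    have := (mem_pairingRadical S).1 hx []
    rw [wordPairing_nil] at this ⊢
    rw [wordCoeff_nil_mul, this, mul_zero]
  | cons b u ih =>
    rw [wordPairing_cons, LinearMap.comp_apply, skewDer_mul, map_add,
      ih _ (skewDer_mem_pairingRadical hx b), ih _ (leftTwist_mem_pairingRadical hx _), add_zero]

theorem mul_mem_pairingRadical_right (a : TV θ) {x : TV θ} (hx : x ∈ pairingRadical S) :
    x * a ∈ pairingRadical S := by
  refine (mem_pairingRadical S).2 fun u => ?_
  induction u generalizing a x with
  | nil =>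
    have := (mem_pairingRadical S).1 hx []
    rw [wordPairing_nil] at this ⊢
    rw [wordCoeff_nil_mul, this, zero_mul]
  | cons b u ih =>
    rw [wordPairing_cons, LinearMap.comp_apply, skewDer_mul, map_add, ih _ hx,
      ih _ (skewDer_mem_pairingRadical hx b), add_zero]

theorem eq_zero_of_mem_pairingRadical {n : ℕ} (hn : n < 2) {x : TV θ}
    (hx : x ∈ pairingRadical S) (hxn : x ∈ homogTot θ n) : x = 0 := by
  refine eq_zero_of_forall_wordCoeff_eq_zero fun w => ?_
  by_cases hw : w.length = n
  · rcases w with _ | ⟨a, _ | ⟨b, w⟩⟩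
    · exact (mem_pairingRadical S).1 hx []
    · rw [← wordPairing_singleton S]
      exact (mem_pairingRadical S).1 hx [a]
    · simp only [List.length_cons] at hw
      omega
  · exact wordCoeff_eq_zero_of_mem_homogTot hxn hw

theorem mem_mixedSub_pairingRadical {X : TV θ ⊗[ℂ] TV θ}
    (hX : ∀ u v, wordPairing S u (rightSlice (wordPairing S v) X) = 0) :
    X ∈ mixedSub (pairingRadical S) := by
  let pairing : List (Fin θ) → (TV θ ⧸ pairingRadical S) →ₗ[ℂ] ℂ := fun u =>
    (pairingRadical S).liftQ (wordPairing S u) fun x hx => (mem_pairingRadical S).1 hx u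
  have hmkQ : ∀ u, pairing u ∘ₗ (pairingRadical S).mkQ = wordPairing S u := fun u =>
    Submodule.liftQ_mkQ _ _ _
  have hsep : ∀ m, (∀ u, pairing u m = 0) → m = 0 := by
    intro m hm
    obtain ⟨x, rfl⟩ := (pairingRadical S).mkQ_surjective m
    exact (Submodule.Quotient.mk_eq_zero _).2 ((mem_pairingRadical S).2 hm)
  refine mem_mixedSub_of_map_mkQ_eq_zero (eq_zero_of_forall_leftSlice_eq_zero hsep fun u =>
    hsep _ fun v => ?_)
  rw [leftSlice_map, hmkQ, ← LinearMap.comp_apply, hmkQ, ← apply_rightSlice, hX]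

variable (S)

theorem isPreNicholsIdeal_pairingRadical : IsPreNicholsIdeal S (pairingRadical S) where
  mul_left a _ hx := mul_mem_pairingRadical_left a hx
  mul_right a _ hx := mul_mem_pairingRadical_right a hx
  homog_ge2 := by
    refine le_antisymm (fun x hx => mem_of_forall_homogProj_mem fun n => ?_)
      (Submodule.span_le.2 fun x hx => hx.1)
    have hn := homogProj_mem_pairingRadical hx n
    by_cases h2 : 2 ≤ n
    · exact Submodule.subset_span ⟨hn, n, h2, homogProj_mem_homogTot n x⟩
    · rw [eq_zero_of_mem_pairingRadical (not_le.1 h2) hn (homogProj_mem_homogTot n x)]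
      exact Submodule.zero_mem _
  coideal x hx := mem_mixedSub_pairingRadical fun u v => by
    rw [wordPairing_rightSlice_wordPairing]
    exact (mem_pairingRadical S).1 hx _

theorem pairingRadical_le_Jq : pairingRadical S ≤ Jq S :=
  le_sSup (isPreNicholsIdeal_pairingRadical S)

end PairingRadical

section PrimitiveFamilies

variable {θ θ' : ℕ} {q : Fin θ → Fin θ → ℂˣ} {S : BraidedStr θ q} {I : Submodule ℂ (TV θ)}

/-- The braiding matrix `(q(d_a, d_b))_{a,b}` of a family of homogeneous elements of multidegrees
`d_a`. -/
def familyBraiding (q : Fin θ → Fin θ → ℂˣ) (d : Fin θ' → Fin θ → ℕ) : Fin θ' → Fin θ' → ℂˣ :=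
  fun a b => Units.mk0 (qf q (d a) (d b)) (qf_ne_zero q _ _)

/-- The elements `y_a ∈ T(V)`, homogeneous of multidegrees `d_a`, become primitive and linearly
independent in the quotient `T(V)/I`; there they span a braided vector space with braiding matrix
`familyBraiding q d`. -/
structure IsPrimitiveFamily (S : BraidedStr θ q) (I : Submodule ℂ (TV θ))
    (d : Fin θ' → Fin θ → ℕ) (y : Fin θ' → TV θ) : Prop where
  mem_homogD : ∀ a, y a ∈ homogD θ (d a)
  isPrimitiveMod : ∀ a, IsPrimitiveMod S I (y a)
  linearIndependent : LinearIndependent ℂ (I.mkQ ∘ y)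

theorem IsPreNicholsIdeal.wordCoeff_nil_eq_zero_of_isPrimitiveMod (hI : IsPreNicholsIdeal S I)
    {y : TV θ} (hy : IsPrimitiveMod S I y) : wordCoeff [] y = 0 := by
  have hε := hI.wordCoeff_eq_zero (w := []) (by simp)
  have h : rightSlice (wordCoeff []) (S.Δ y - (y ⊗ₜ 1 + 1 ⊗ₜ y)) = -(wordCoeff [] y • 1) := by
    simp [rightSlice_wordCoeff_nil_Δ, wordCoeff_one]
  simpa [h, wordCoeff_one] using hε _ (rightSlice_mem hε hy)

theorem wordPairing_rightSlice_congr (S : BraidedStr θ q) {η η' : TV θ →ₗ[ℂ] ℂ}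
    (h : ∀ x ∈ Wfil θ 1, η x = η' x) (u : List (Fin θ)) {x : TV θ}
    (hx : x ∈ Wfil θ (u.length + 1)) :
    wordPairing S u (rightSlice η (S.Δ x)) = wordPairing S u (rightSlice η' (S.Δ x)) := by
  rw [apply_rightSlice, apply_rightSlice]
  refine h _ ?_
  suffices Wfil θ (u.length + 1) ≤ (Wfil θ 1).comap (leftSlice (wordPairing S u) ∘ₗ S.Δ) from
    this hx
  refine span_wordElem_le fun w hw => ?_
  refine Δ_wordElem_mem S (p := (Wfil θ 1).comap (leftSlice (wordPairing S u))) fun v v' hv => ?_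
  rw [Submodule.mem_comap, leftSlice_tmul]
  by_cases huv : u.length = v.length
  · exact Submodule.smul_mem _ _ (wordElem_mem_Wfil (by omega))
  · simp [wordPairing_wordElem_of_length_ne S huv]

theorem rightSlice_Δ_mem_Wfil (S : BraidedStr θ q) {η : TV θ →ₗ[ℂ] ℂ} (hη : η 1 = 0) {n : ℕ}
    {x : TV θ} (hx : x ∈ Wfil θ (n + 1)) : rightSlice η (S.Δ x) ∈ Wfil θ n := by
  suffices Wfil θ (n + 1) ≤ (Wfil θ n).comap (rightSlice η ∘ₗ S.Δ) from this hx
  refine span_wordElem_le fun w hw => ?_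
  refine Δ_wordElem_mem S (p := (Wfil θ n).comap (rightSlice η)) fun v v' hv => ?_
  rw [Submodule.mem_comap, rightSlice_tmul]
  rcases v' with _ | ⟨b, v'⟩
  · simp [hη]
  · refine Submodule.smul_mem _ _ (wordElem_mem_Wfil ?_)
    simp only [List.length_cons] at hv
    omega

namespace IsPrimitiveFamily

variable {d : Fin θ' → Fin θ → ℕ} {y : Fin θ' → TV θ}

theorem exists_dual (hy : IsPrimitiveFamily S I d y) (hI : IsPreNicholsIdeal S I) (a : Fin θ') :
    ∃ ξ : TV θ →ₗ[ℂ] ℂ, (∀ x ∈ I, ξ x = 0) ∧ ξ 1 = 0 ∧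
      ∀ b, ξ (y b) = if b = a then 1 else 0 := by
  obtain ⟨η, hη⟩ := LinearMap.exists_extend
    (Finsupp.lapply (R := ℂ) a ∘ₗ hy.linearIndependent.repr)
  have hηy : ∀ b, η (I.mkQ (y b)) = if b = a then 1 else 0 := fun b => by
    have hb : I.mkQ (y b) ∈ Submodule.span ℂ (Set.range (I.mkQ ∘ y)) :=
      Submodule.subset_span ⟨b, rfl⟩
    have h := LinearMap.congr_fun hη ⟨_, hb⟩
    rw [LinearMap.comp_apply, LinearMap.comp_apply,
      hy.linearIndependent.repr_eq_single b ⟨_, hb⟩ rfl] at h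
    simpa [Finsupp.single_apply] using h
  refine ⟨η ∘ₗ I.mkQ - η (I.mkQ 1) • wordCoeff [], fun x hx => ?_, ?_, fun b => ?_⟩
  · rw [LinearMap.sub_apply, LinearMap.smul_apply, hI.wordCoeff_eq_zero (by simp) x hx,
      LinearMap.comp_apply, I.mkQ_apply, (Submodule.Quotient.mk_eq_zero I).2 hx]
    simp
  · simp [wordCoeff_one]
  · rw [LinearMap.sub_apply, LinearMap.smul_apply,
      hI.wordCoeff_nil_eq_zero_of_isPrimitiveMod (hy.isPrimitiveMod b), LinearMap.comp_apply, hηy]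
    simp

theorem leftTwist_lift (hy : IsPrimitiveFamily S I d y) (a : Fin θ') (x : TV θ') :
    leftTwist q (d a) (FreeAlgebra.lift ℂ y x) =
      FreeAlgebra.lift ℂ y (leftTwist (familyBraiding q d) (δ θ' a) x) := by
  have : (leftTwist q (d a)).comp (FreeAlgebra.lift ℂ y) =
      (FreeAlgebra.lift ℂ y).comp (leftTwist (familyBraiding q d) (δ θ' a)) :=
    algHom_ext_gen fun b => by
      simp [leftTwist_of_mem_homogD q (hy.mem_homogD b), familyBraiding]
  exact DFunLike.congr_fun this x

theorem map_lift_mulLeftΔ (hy : IsPrimitiveFamily S I d y) (a : Fin θ') (X : TV θ' ⊗[ℂ] TV θ') :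
    TensorProduct.map (FreeAlgebra.lift ℂ y).toLinearMap (FreeAlgebra.lift ℂ y).toLinearMap
        (mulLeftΔ (familyBraiding q d) a X) =
      S.mulB (y a ⊗ₜ 1 + 1 ⊗ₜ y a) (TensorProduct.map (FreeAlgebra.lift ℂ y).toLinearMap
        (FreeAlgebra.lift ℂ y).toLinearMap X) := by
  induction X with
  | zero => simp
  | tmul u v =>
    rw [TensorProduct.map_tmul, mulB_primitive_left S (hy.mem_homogD a), mulLeftΔ_tmul, map_add,
      TensorProduct.map_tmul, TensorProduct.map_tmul]
    simp only [AlgHom.toLinearMap_apply, map_mul, lift_gen, hy.leftTwist_lift]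
  | add X Y hX hY => simp only [map_add, hX, hY]

theorem Δ_lift_sub_map_lift_Δ_mem (hy : IsPrimitiveFamily S I d y) (hI : IsPreNicholsIdeal S I)
    (S' : BraidedStr θ' (familyBraiding q d)) (x : TV θ') :
    S.Δ (FreeAlgebra.lift ℂ y x) - TensorProduct.map (FreeAlgebra.lift ℂ y).toLinearMap
      (FreeAlgebra.lift ℂ y).toLinearMap (S'.Δ x) ∈ mixedSub I := by
  refine mem_of_forall_wordElem_mem (p := (mixedSub I).comap
    (S.Δ ∘ₗ (FreeAlgebra.lift ℂ y).toLinearMap - TensorProduct.map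
      (FreeAlgebra.lift ℂ y).toLinearMap (FreeAlgebra.lift ℂ y).toLinearMap ∘ₗ S'.Δ))
    (fun w => ?_) x
  simp only [Submodule.mem_comap, LinearMap.sub_apply, LinearMap.comp_apply,
    AlgHom.toLinearMap_apply]
  induction w with
  | nil => simp [S.Δ_one, S'.Δ_one]
  | cons a w ih =>
    rw [wordElem_cons, map_mul, lift_gen, S.Δ_mul, Δ_gen_mul, hy.map_lift_mulLeftΔ]
    have h1 := hI.mulB_mem_left (hy.isPrimitiveMod a) (S.Δ (FreeAlgebra.lift ℂ y (wordElem θ' w)))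
    have h2 := hI.mulB_mem_right (y a ⊗ₜ 1 + 1 ⊗ₜ y a) ih
    simpa only [map_sub, LinearMap.sub_apply, sub_add_sub_cancel] using Submodule.add_mem _ h1 h2

theorem lift_rightSlice_mem (hy : IsPrimitiveFamily S I d y) (hI : IsPreNicholsIdeal S I)
    (S' : BraidedStr θ' (familyBraiding q d)) {ξ : TV θ →ₗ[ℂ] ℂ} (hξ : ∀ x ∈ I, ξ x = 0)
    {x : TV θ'} (hx : FreeAlgebra.lift ℂ y x ∈ I) :
    FreeAlgebra.lift ℂ y
      (rightSlice (ξ ∘ₗ (FreeAlgebra.lift ℂ y).toLinearMap) (S'.Δ x)) ∈ I := by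
  have h := rightSlice_mem hξ ((Submodule.sub_mem_iff_right _ (hI.coideal _ hx)).1
    (hy.Δ_lift_sub_map_lift_Δ_mem hI S' x))
  rwa [rightSlice_map] at h

theorem wordPairing_eq_zero (hy : IsPrimitiveFamily S I d y) (hI : IsPreNicholsIdeal S I)
    (S' : BraidedStr θ' (familyBraiding q d)) (u : List (Fin θ')) {x : TV θ'}
    (hxu : x ∈ Wfil θ' u.length) (hx : FreeAlgebra.lift ℂ y x ∈ I) : wordPairing S' u x = 0 := by
  induction u generalizing x with
  | nil =>
    rw [eq_smul_one_of_mem_Wfil_zero hxu, map_smul, map_one] at hx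
    simpa [wordPairing_nil, wordCoeff_one] using hI.wordCoeff_eq_zero (w := []) (by simp) _ hx
  | cons a u ih =>
    obtain ⟨ξ, hξI, hξ1, hξy⟩ := hy.exists_dual hI a
    have hξ : ∀ z ∈ Wfil θ' 1,
        wordCoeff [a] z = (ξ ∘ₗ (FreeAlgebra.lift ℂ y).toLinearMap) z := by
      refine fun z hz => (span_wordElem_le (p := LinearMap.eqLocus _ _) fun w hw => ?_) hz
      rw [LinearMap.mem_eqLocus, wordCoeff_wordElem]
      rcases w with _ | ⟨b, _ | ⟨c, w⟩⟩
      · simp [hξ1]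
      · simp [hξy]
      · simp at hw
    rw [wordPairing_cons, LinearMap.comp_apply, skewDer, LinearMap.comp_apply,
      wordPairing_rightSlice_congr S' hξ u hxu]
    exact ih (rightSlice_Δ_mem_Wfil S' (by simp [hξ1]) hxu)
      (hy.lift_rightSlice_mem hI S' hξI hx)

theorem homogProj_mem_pairingRadical (hy : IsPrimitiveFamily S I d y)
    (hI : IsPreNicholsIdeal S I) (S' : BraidedStr θ' (familyBraiding q d)) {n : ℕ} {x : TV θ'}
    (hxn : x ∈ Wfil θ' n) (hx : FreeAlgebra.lift ℂ y x ∈ I) :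
    homogProj n x ∈ pairingRadical S' := by
  refine (mem_pairingRadical S').2 fun u => ?_
  rw [wordPairing_homogProj]
  split_ifs with h
  · subst h
    exact hy.wordPairing_eq_zero hI S' u hxn hx
  · rfl

theorem finrank_map_Jq_le (hy : IsPrimitiveFamily S I d y) (hI : IsPreNicholsIdeal S I)
    (S' : BraidedStr θ' (familyBraiding q d)) (n : ℕ) :
    Module.finrank ℂ ((Wfil θ' n).map (Jq S').mkQ) ≤
      Module.finrank ℂ ((Wfil θ' n).map (I.mkQ ∘ₗ (FreeAlgebra.lift ℂ y).toLinearMap)) := by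
  have hJ : ∀ n, ∀ x ∈ Wfil θ' n, (I.mkQ ∘ₗ (FreeAlgebra.lift ℂ y).toLinearMap) x = 0 →
      (Jq S').mkQ (homogProj n x) = 0 := fun n x hx h =>
    (Submodule.Quotient.mk_eq_zero _).2 (pairingRadical_le_Jq S'
      (hy.homogProj_mem_pairingRadical hI S' hx ((Submodule.Quotient.mk_eq_zero I).1 h)))
  refine finrank_map_le_finrank_map_of_filtration Wfil_mono (fun x hx h => ?_)
    (fun n x hx h => ⟨x - homogProj (n + 1) x, sub_homogProj_mem_Wfil hx, ?_⟩) n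
  · have hx0 : homogProj 0 x = x := by
      rw [eq_smul_one_of_mem_Wfil_zero hx, ← wordElem_nil, map_smul, homogProj_wordElem]
      rfl
    simpa [hx0] using hJ 0 x hx h
  · rw [map_sub, hJ _ x hx h, sub_zero]

theorem map_lift_Wfil_le (hy : IsPrimitiveFamily S I d y) (n : ℕ) :
    (Wfil θ' n).map (FreeAlgebra.lift ℂ y).toLinearMap ≤ Wfil θ ((∑ a, ∑ i, d a i) * n) := by
  rw [Submodule.map_le_iff_le_comap]
  refine span_wordElem_le fun w hw => Wfil_mono (Nat.mul_le_mul_left _ hw) ?_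
  rw [AlgHom.toLinearMap_apply]
  clear hw
  induction w with
  | nil => rw [wordElem_nil, map_one, ← wordElem_nil]; exact wordElem_mem_Wfil (by simp)
  | cons a w ih =>
    rw [wordElem_cons, map_mul, lift_gen, List.length_cons, mul_add, mul_one, add_comm]
    exact mul_mem_Wfil (homogD_le_Wfil (Finset.single_le_sum (f := fun a => ∑ i, d a i)
      (fun _ _ => zero_le) (Finset.mem_univ a)) (hy.mem_homogD a)) ih

theorem finGK_Jq (hy : IsPrimitiveFamily S I d y) (hI : IsPreNicholsIdeal S I) (hGK : FinGK I)
    (S' : BraidedStr θ' (familyBraiding q d)) : FinGK (Jq S') := by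
  obtain ⟨C, e, hC⟩ := hGK
  set D := ∑ a, ∑ i, d a i
  refine ⟨C * (D + 1) ^ e, e, fun n => ?_⟩
  calc Module.finrank ℂ ((Wfil θ' n).map (Jq S').mkQ)
      ≤ Module.finrank ℂ ((Wfil θ' n).map (I.mkQ ∘ₗ (FreeAlgebra.lift ℂ y).toLinearMap)) :=
        hy.finrank_map_Jq_le hI S' n
    _ ≤ Module.finrank ℂ ((Wfil θ (D * n)).map I.mkQ) := by
      rw [Submodule.map_comp]
      exact Submodule.finrank_mono (Submodule.map_mono (hy.map_lift_Wfil_le n))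
    _ ≤ C * (D * n + 1) ^ e := hC _
    _ ≤ C * ((D + 1) * (n + 1)) ^ e := by gcongr; nlinarith
    _ = C * (D + 1) ^ e * (n + 1) ^ e := by rw [mul_pow, mul_assoc]

end IsPrimitiveFamily

theorem disjoint_homogTot_one (hI : IsPreNicholsIdeal S I) : Disjoint (homogTot θ 1) I := by
  refine Submodule.disjoint_def.2 fun x hx hxI => eq_zero_of_forall_wordCoeff_eq_zero fun w => ?_
  by_cases hw : w.length = 1
  · exact hI.wordCoeff_eq_zero (by omega) x hxI
  · exact wordCoeff_eq_zero_of_mem_homogTot hx hw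

theorem linearIndependent_gen : LinearIndependent ℂ (gen θ) := by
  have h := (wordBasis θ).linearIndependent.comp (fun i => [i]) fun i j h => by simpa using h
  simpa [Function.comp_def, wordBasis_apply] using h

theorem isPrimitiveFamily_cons (hI : IsPreNicholsIdeal S I) {e : Fin θ → ℕ} (he : 2 ≤ ∑ i, e i)
    {y : TV θ} (hye : y ∈ homogD θ e) (hyI : y ∉ I)
    (hy : IsPrimitiveMod S I y) :
    IsPrimitiveFamily S I (Fin.cons e (δ θ)) (Fin.cons y (gen θ)) where
  mem_homogD := Fin.cases hye gen_mem_homogD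
  isPrimitiveMod := Fin.cases hy fun a => by simp [IsPrimitiveMod, S.Δ_gen]
  linearIndependent := by
    have hgen : Submodule.span ℂ (Set.range (gen θ)) ≤ homogTot θ 1 :=
      Submodule.span_le.2 (by rintro _ ⟨i, rfl⟩; exact gen_mem_homogTot i)
    rw [Fin.comp_cons, linearIndependent_finCons]
    refine ⟨linearIndependent_gen.map ?_, fun hmem => hyI ?_⟩
    · rw [Submodule.ker_mkQ]
      exact (disjoint_homogTot_one hI).mono_left hgen
    · rw [Set.range_comp, ← Submodule.map_span] at hmem
      obtain ⟨z, hz, hzy⟩ := hmem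
      have hzyI : z - y ∈ I := (Submodule.Quotient.eq I).1 hzy
      have hz0 : z = 0 := eq_zero_of_forall_wordCoeff_eq_zero fun w => by
        by_cases hw : w.length = 1
        · have h := hI.wordCoeff_eq_zero (w := w) (by omega) _ hzyI
          rwa [map_sub, wordCoeff_eq_zero_of_mem_homogTot (homogD_le_homogTot e hye) (by omega),
            sub_zero] at h
        · exact wordCoeff_eq_zero_of_mem_homogTot (hgen hz) hw
      simpa [hz0] using hzyI

theorem finiteRootSystem_cons (hAAH : AAH) (hI : IsPreNicholsIdeal S I) (hGK : FinGK I)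
    {e : Fin θ → ℕ} (he : 2 ≤ ∑ i, e i) {y : TV θ} (hye : y ∈ homogD θ e) (hyI : y ∉ I)
    (hy : IsPrimitiveMod S I y) :
    FiniteRootSystem (familyBraiding q (Fin.cons e (δ θ) : Fin (θ + 1) → Fin θ → ℕ)) :=
  hAAH _ _ (braidedStr _)
    ((isPrimitiveFamily_cons hI he hye hyI hy).finGK_Jq hI hGK (braidedStr _))

end PrimitiveFamilies

section QuarticRelator

variable {θ : ℕ} {q : Fin θ → Fin θ → ℂˣ} {i j k : Fin θ}

theorem brk_mem_homogD (q : Fin θ → Fin θ → ℂˣ) (c d : Fin θ → ℕ) {a b : Fin θ → ℕ}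
    {x y : TV θ} (hx : x ∈ homogD θ a) (hy : y ∈ homogD θ b) :
    brk q c d x y ∈ homogD θ (a + b) :=
  Submodule.sub_mem _ (mul_mem_homogD hx hy)
    (Submodule.smul_mem _ _ (add_comm b a ▸ mul_mem_homogD hy hx))

theorem xw_mem_homogD (q : Fin θ → Fin θ → ℂˣ) (w : List (Fin θ)) :
    xw q w ∈ homogD θ (degW θ w) := by
  induction w with
  | nil => exact wordElem_mem_homogD []
  | cons i w ih =>
    rw [degW_cons]
    cases w with
    | nil => simpa [xw] using gen_mem_homogD i
    | cons j w => exact brk_mem_homogD q _ _ (gen_mem_homogD i) ih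

/-- The element `[x_i, x_{jjk}]_c - (1 + q_{jj}²) q_{kj}⁻¹ [x_{ijk}, x_j]_c
- (1 + q_{jj}²)(1 + q_{jj}) q_{ij} x_j x_{ijk}` of `T(V)`. -/
def quarticRelator (q : Fin θ → Fin θ → ℂˣ) (i j k : Fin θ) : TV θ :=
  brk q (δ θ i) (δ θ j + δ θ j + δ θ k) (gen θ i) (xw q [j, j, k]) -
    ((1 + (q j j : ℂ) ^ 2) * ((q k j : ℂ))⁻¹) •
      brk q (δ θ i + δ θ j + δ θ k) (δ θ j) (xw q [i, j, k]) (gen θ j) -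
    ((1 + (q j j : ℂ) ^ 2) * (1 + (q j j : ℂ)) * (q i j : ℂ)) •
      (gen θ j * xw q [i, j, k])

theorem quarticRelator_mem_homogD (q : Fin θ → Fin θ → ℂˣ) (i j k : Fin θ) :
    quarticRelator q i j k ∈ homogD θ (degW θ [i, j, j, k]) := by
  have hijk := xw_mem_homogD q [i, j, k]
  have hjjk := xw_mem_homogD q [j, j, k]
  refine Submodule.sub_mem _ (Submodule.sub_mem _ ?_ (Submodule.smul_mem _ _ ?_))
    (Submodule.smul_mem _ _ ?_)
  · exact degW_cons i [j, j, k] ▸ brk_mem_homogD q _ _ (gen_mem_homogD i) hjjk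
  · convert brk_mem_homogD q _ _ hijk (gen_mem_homogD j) using 2
    simp only [degW_cons, degW_nil]; abel
  · convert mul_mem_homogD (gen_mem_homogD j) hijk using 2
    simp only [degW_cons, degW_nil]; abel

theorem xw_cons_cons (q : Fin θ → Fin θ → ℂˣ) (i j : Fin θ) (w : List (Fin θ)) :
    xw q (i :: j :: w) = ad1 q i (degW θ (j :: w)) (xw q (j :: w)) := rfl

/-- The operator on `T(V) ⊗ T(V)` which corresponds under the coproduct to `ad_c x_i`, acting on
the component of multidegree `b`. -/
def adΔ (q : Fin θ → Fin θ → ℂˣ) (i : Fin θ) (b : Fin θ → ℕ) :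
    TV θ ⊗[ℂ] TV θ →ₗ[ℂ] TV θ ⊗[ℂ] TV θ :=
  mulLeftΔ q i - qf q (δ θ i) b • mulRightΔ q i

theorem Δ_ad1 (S : BraidedStr θ q) (i : Fin θ) (b : Fin θ → ℕ) (y : TV θ) :
    S.Δ (ad1 q i b y) = adΔ q i b (S.Δ y) := by
  simp [ad1, brk, adΔ, Δ_gen_mul, Δ_mul_gen]

theorem adΔ_tmul (i : Fin θ) {a b c : Fin θ → ℕ} (habc : a + c = b) {u v : TV θ}
    (hu : u ∈ homogD θ a) (hv : v ∈ homogD θ c) :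
    adΔ q i b (u ⊗ₜ v) = ad1 q i a u ⊗ₜ v + qf q (δ θ i) a • (u ⊗ₜ ad1 q i c v) +
      (qf q (δ θ i) a * (1 - qf q (δ θ i) c * qf q c (δ θ i))) • ((u * gen θ i) ⊗ₜ v) := by
  subst habc
  simp only [adΔ, LinearMap.sub_apply, LinearMap.smul_apply, mulLeftΔ_tmul, mulRightΔ_tmul,
    leftTwist_of_mem_homogD q hu, rightTwist_of_mem_homogD q hv, ad1, brk, qf_add_right,
    TensorProduct.sub_tmul, TensorProduct.tmul_sub, ← TensorProduct.smul_tmul',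
    TensorProduct.tmul_smul]
  module

theorem adΔ_primitive (i : Fin θ) {b : Fin θ → ℕ} {y : TV θ} (hy : y ∈ homogD θ b) :
    adΔ q i b (y ⊗ₜ 1 + 1 ⊗ₜ y) = ad1 q i b y ⊗ₜ 1 + 1 ⊗ₜ ad1 q i b y +
      (1 - qf q (δ θ i) b * qf q b (δ θ i)) • (gen θ i ⊗ₜ y) := by
  have h1 : (1 : TV θ) ∈ homogD θ 0 := by simpa using wordElem_mem_homogD (θ := θ) []
  rw [map_add, adΔ_tmul i (add_zero b) hy h1, adΔ_tmul i (zero_add b) h1 hy]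
  simp [ad1, brk, add_assoc]

theorem Δ_xw_pair (S : BraidedStr θ q) (j k : Fin θ) :
    S.Δ (xw q [j, k]) = xw q [j, k] ⊗ₜ 1 + 1 ⊗ₜ xw q [j, k] +
      (1 - qtil q j k) • (gen θ j ⊗ₜ gen θ k) := by
  rw [xw_cons_cons, Δ_ad1, xw, S.Δ_gen, adΔ_primitive j (by simpa using gen_mem_homogD k)]
  simp [qtil]

theorem Δ_xw_jjk (S : BraidedStr θ q) (j k : Fin θ) :
    S.Δ (xw q [j, j, k]) = xw q [j, j, k] ⊗ₜ 1 + 1 ⊗ₜ xw q [j, j, k] +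
      ((1 + q j j) * (1 - q j j * qtil q j k)) • (gen θ j ⊗ₜ xw q [j, k]) +
      ((1 - qtil q j k) * (1 - q j j * qtil q j k)) • ((gen θ j * gen θ j) ⊗ₜ gen θ k) := by
  rw [xw_cons_cons q j j, Δ_ad1, Δ_xw_pair, map_add, adΔ_primitive j (xw_mem_homogD q [j, k]),
    map_smul, adΔ_tmul j (by simp) (gen_mem_homogD j) (gen_mem_homogD k)]
  simp only [xw, ad1, brk, qf_δ, degW_cons, degW_nil, add_zero, qf_add_left,
    qf_add_right, qtil, TensorProduct.sub_tmul, ← TensorProduct.smul_tmul']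
  module

theorem Δ_xw_ijk (S : BraidedStr θ q) (hik : qtil q i k = 1) :
    S.Δ (xw q [i, j, k]) = xw q [i, j, k] ⊗ₜ 1 + 1 ⊗ₜ xw q [i, j, k] +
      (1 - qtil q i j) • (gen θ i ⊗ₜ xw q [j, k]) +
      (1 - qtil q j k) • (xw q [i, j] ⊗ₜ gen θ k + (q i j : ℂ) • (gen θ j ⊗ₜ xw q [i, k])) := by
  rw [xw_cons_cons q i j, Δ_ad1, Δ_xw_pair, map_add, adΔ_primitive i (xw_mem_homogD q [j, k]),
    map_smul, adΔ_tmul i (by simp) (gen_mem_homogD j) (gen_mem_homogD k)]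
  simp only [xw, qf_δ, degW_cons, degW_nil, add_zero, qf_add_left, qf_add_right, qtil] at hik ⊢
  match_scalars <;> grind

theorem Δ_ad1_xw_jjk (S : BraidedStr θ q) (hik : qtil q i k = 1) :
    S.Δ (ad1 q i (degW θ [j, j, k]) (xw q [j, j, k])) =
      ad1 q i (degW θ [j, j, k]) (xw q [j, j, k]) ⊗ₜ 1 +
      1 ⊗ₜ ad1 q i (degW θ [j, j, k]) (xw q [j, j, k]) +
      (1 - qtil q i j ^ 2) • (gen θ i ⊗ₜ xw q [j, j, k]) +
      ((1 + q j j) * (1 - q j j * qtil q j k)) •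
        (xw q [i, j] ⊗ₜ xw q [j, k] + (q i j : ℂ) • (gen θ j ⊗ₜ xw q [i, j, k]) +
          (q i j * (1 - qtil q i j)) • ((gen θ j * gen θ i) ⊗ₜ xw q [j, k])) +
      ((1 - qtil q j k) * (1 - q j j * qtil q j k)) •
        ((xw q [i, j] * gen θ j + (q i j : ℂ) • (gen θ j * xw q [i, j])) ⊗ₜ gen θ k +
          (q i j ^ 2 : ℂ) • ((gen θ j * gen θ j) ⊗ₜ xw q [i, k])) := by
  have hjj := mul_mem_homogD (gen_mem_homogD j) (gen_mem_homogD j)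
  have had : ad1 q i (δ θ j + δ θ j) (gen θ j * gen θ j) =
      xw q [i, j] * gen θ j + (q i j : ℂ) • (gen θ j * xw q [i, j]) := by
    simp only [xw, ad1, brk, degW_cons, degW_nil, add_zero, qf_add_right, qf_δ, sub_mul, mul_sub,
      mul_assoc, smul_mul_assoc, mul_smul_comm]
    module
  rw [Δ_ad1, Δ_xw_jjk, map_add, map_add, adΔ_primitive i (xw_mem_homogD q [j, j, k]), map_smul,
    map_smul, adΔ_tmul i (by simp) (gen_mem_homogD j) (xw_mem_homogD q [j, k]),
    adΔ_tmul i (by simp [add_assoc]) hjj (gen_mem_homogD k), had]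
  simp only [xw, qf_δ, degW_cons, degW_nil, add_zero, qf_add_left, qf_add_right, qtil] at hik ⊢
  match_scalars <;> grind

theorem quarticRelator_eq (q : Fin θ → Fin θ → ℂˣ) (i j k : Fin θ) :
    quarticRelator q i j k = ad1 q i (degW θ [j, j, k]) (xw q [j, j, k]) -
      (1 + q j j ^ 2 : ℂ) • ((q k j : ℂ)⁻¹ • (xw q [i, j, k] * gen θ j) +
        (q i j : ℂ) • (gen θ j * xw q [i, j, k])) := by
  have hkj : (q k j : ℂ)⁻¹ * q k j = 1 := inv_mul_cancel₀ (q k j).ne_zero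
  simp only [quarticRelator, ad1, brk, degW_cons, degW_nil, qf_add_left, qf_δ, add_zero, add_assoc]
  match_scalars <;> grind

theorem xw_pair (q : Fin θ → Fin θ → ℂˣ) (i j : Fin θ) :
    xw q [i, j] = gen θ i * gen θ j - (q i j : ℂ) • (gen θ j * gen θ i) := by
  simp [xw, ad1, brk]

theorem Δ_quarticRelator (S : BraidedStr θ q) (hik : qtil q i k = 1)
    (hjk : (q j j : ℂ) = -qtil q j k) (hij : qtil q i j * q j j ^ 2 = 1) :
    S.Δ (quarticRelator q i j k) =
      quarticRelator q i j k ⊗ₜ 1 + 1 ⊗ₜ quarticRelator q i j k -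
      ((1 + q j j ^ 2) * (1 + q j j) * q i j : ℂ) •
        ((q i j : ℂ) • ((gen θ j * gen θ j) ⊗ₜ xw q [i, k]) +
          gen θ j ⊗ₜ ((q k j : ℂ)⁻¹ • (xw q [i, k] * gen θ j) +
            (q i j * q j j : ℂ) • (gen θ j * xw q [i, k]))) := by
  have hxij : gen θ i * gen θ j = xw q [i, j] + (q i j : ℂ) • (gen θ j * gen θ i) := by
    simp [xw_pair]
  have hxjk : gen θ j * gen θ k = xw q [j, k] + (q j k : ℂ) • (gen θ k * gen θ j) := by
    simp [xw_pair]
  have hxjjk : xw q [j, j, k] =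
      gen θ j * xw q [j, k] - (q j j * q j k : ℂ) • (xw q [j, k] * gen θ j) := by
    simp [xw_cons_cons q j j, ad1, brk, qf_add_right]
  rw [quarticRelator_eq, map_sub, Δ_ad1_xw_jjk S hik]
  simp only [map_smul, map_add, Δ_gen_mul, Δ_mul_gen, Δ_xw_ijk S hik,
    mulLeftΔ_tmul, mulRightΔ_tmul, leftTwist_of_mem_homogD q (xw_mem_homogD q _),
    rightTwist_of_mem_homogD q (xw_mem_homogD q _), leftTwist_gen, rightTwist_gen,
    map_one, one_mul, mul_one, qf_add_left, qf_add_right, degW_cons, degW_nil, add_zero, qf_δ,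
    hxij, hxjk, hxjjk, TensorProduct.tmul_sub, TensorProduct.sub_tmul,
    TensorProduct.tmul_add, TensorProduct.add_tmul, ← TensorProduct.smul_tmul',
    TensorProduct.tmul_smul]
  have hkj : (q k j : ℂ) * (q k j : ℂ)⁻¹ = 1 := mul_inv_cancel₀ (q k j).ne_zero
  simp only [qtil] at hik hij hjk ⊢
  match_scalars <;> grind

end QuarticRelator

section Reflections

variable {θ : ℕ} {q : Fin θ → Fin θ → ℂˣ} {a b c : Fin θ}

theorem qtil_comm (q : Fin θ → Fin θ → ℂˣ) (a b : Fin θ) : qtil q a b = qtil q b a :=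
  mul_comm _ _

theorem cij_eq_zero (hab : a ≠ b) (h : qtil q a b = 1) : cij q a b = 0 := by
  have h0 : 0 ∈ cSet q a b := by simp [cSet, h]
  simp [cij, hab, Nat.sInf_eq_zero.2 (Or.inl h0)]

theorem cij_eq_neg_one (hab : a ≠ b) (ha : (q a a : ℂ) = -1) (h : qtil q a b ≠ 1) :
    cij q a b = -1 := by
  have h0 : 0 ∉ cSet q a b := by simp [cSet, qnum, sub_eq_zero, h.symm]
  have h1 : 1 ∈ cSet q a b := by simp [cSet, qnum, ha, Finset.sum_range_succ]
  have hmin : sInf (cSet q a b) = 1 := by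
    refine le_antisymm (Nat.sInf_le h1) (Nat.one_le_iff_ne_zero.2 fun h => ?_)
    exact h0 (h ▸ Nat.sInf_mem ⟨1, h1⟩)
  simp [cij, hab, hmin]

theorem not_reflectable (hab : a ≠ b) (ha : (q a a : ℂ) = 1) (h : qtil q a b ≠ 1) :
    ¬ reflectable q a := fun hr => by
  obtain ⟨n, hn⟩ := hr b hab.symm
  have hn' : ((n : ℂ) + 1) * (1 - qtil q a b) = 0 := by simpa [cSet, qnum, ha] using hn
  exact mul_ne_zero (Nat.cast_add_one_ne_zero n) (sub_ne_zero.2 h.symm) hn'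

theorem reflectMat_self (hab : a ≠ b) (ha : (q a a : ℂ) = -1) (h : qtil q a b ≠ 1) :
    (reflectMat q a b b : ℂ) = -(q b b * qtil q a b) := by
  simp [reflectMat, cij_eq_neg_one hab ha h, ha, qtil]
  ring

theorem reflectMat_self_of_qtil_eq_one (hab : a ≠ b) (h : qtil q a b = 1) :
    reflectMat q a b b = q b b := by
  simp [reflectMat, cij_eq_zero hab h]

theorem qtil_reflectMat_left (hab : a ≠ b) (ha : (q a a : ℂ) = -1) (h : qtil q a b ≠ 1) :
    qtil (reflectMat q a) a b = (qtil q a b)⁻¹ := by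
  have haa : cij q a a = 2 := if_pos rfl
  have h1 := (q a b).ne_zero
  have h2 := (q b a).ne_zero
  simp [reflectMat, cij_eq_neg_one hab ha h, ha, qtil, haa]
  field_simp

theorem qtil_reflectMat_left_of_qtil_eq_one (hab : a ≠ b) (h : qtil q a b = 1) :
    qtil (reflectMat q a) a b = 1 := by
  have haa : cij q a a = 2 := if_pos rfl
  have h1 := (q a b).ne_zero
  have h2 := (q b a).ne_zero
  have hab' : (q a b : ℂ) * q b a = 1 := h
  simp [reflectMat, cij_eq_zero hab h, qtil, haa]
  field_simp
  grind

theorem qtil_reflectMat (hab : a ≠ b) (hac : a ≠ c) (ha : (q a a : ℂ) = -1)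
    (hb : qtil q a b ≠ 1) (hc : qtil q a c = 1) :
    qtil (reflectMat q a) b c = qtil q b c := by
  have hac' : (q a c : ℂ) * q c a = 1 := hc
  simp [reflectMat, cij_eq_neg_one hab ha hb, cij_eq_zero hac hc, qtil]
  linear_combination (q b c * q c b : ℂ) * hac'

theorem not_finiteRootSystem_of_eq_one (hab : a ≠ b) (ha : (q a a : ℂ) = 1)
    (h : qtil q a b ≠ 1) : ¬ FiniteRootSystem q := fun hF =>
  not_reflectable hab ha h (hF.1 q a ⟨_, .simple a⟩)

theorem not_finiteRootSystem_of_mul_eq_one (hab : a ≠ b) (hac : a ≠ c) (hbc : b ≠ c)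
    (ha : (q a a : ℂ) = -1) (hb : (q b b : ℂ) = -1) (hqab : qtil q a b = 1)
    (hqac : qtil q a c ≠ 1) (hqbc : qtil q b c ≠ 1)
    (hc : (q c c : ℂ) * qtil q a c * qtil q b c = 1) : ¬ FiniteRootSystem q := fun hF => by
  -- After reflecting at `a` and then at `b`, the vertex `c` carries the label `1`.
  set r := reflectMat q a with hr
  have hrbb : (r b b : ℂ) = -1 := by rw [hr, reflectMat_self_of_qtil_eq_one hab hqab, hb]
  have hrcc : (r c c : ℂ) = -(q c c * qtil q a c) := reflectMat_self hac ha hqac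
  have hrba : qtil r b a = 1 := by
    rw [qtil_comm, hr, qtil_reflectMat_left_of_qtil_eq_one hab hqab]
  have hrbc : qtil r b c = qtil q b c := by
    rw [qtil_comm, hr, qtil_reflectMat hac hab ha hqac hqab, qtil_comm]
  have hrca : qtil r c a = (qtil q a c)⁻¹ := by
    rw [qtil_comm, hr, qtil_reflectMat_left hac ha hqac]
  have hrbc_ne : qtil r b c ≠ 1 := hrbc ▸ hqbc
  refine not_reflectable hac.symm ?_ ?_
    (hF.1 (reflectMat r b) c ⟨_, .reflect b (.reflect a (.simple c))⟩)
  · rw [reflectMat_self hbc hrbb hrbc_ne, hrcc, hrbc, neg_mul, neg_neg, hc]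
  · rwa [qtil_reflectMat hbc hab.symm hrbb hrbc_ne hrba, hrca, inv_ne_one]

end Reflections

section Membership

variable {θ : ℕ} {q : Fin θ → Fin θ → ℂˣ} {S : BraidedStr θ q} {I : Submodule ℂ (TV θ)}
  {i j k : Fin θ}

theorem mem_of_isPrimitiveMod_of_qf_self_eq_one (hAAH : AAH) (hI : IsPreNicholsIdeal S I)
    (hGK : FinGK I) {e : Fin θ → ℕ} (he : 2 ≤ ∑ i, e i) {y : TV θ} (hye : y ∈ homogD θ e)
    (hy : IsPrimitiveMod S I y) (hee : qf q e e = 1)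
    (hj : qf q e (δ θ j) * qf q (δ θ j) e ≠ 1) : y ∈ I := by
  by_contra hyI
  exact absurd (finiteRootSystem_cons hAAH hI hGK he hye hyI hy)
    (not_finiteRootSystem_of_eq_one (Fin.succ_ne_zero j).symm hee hj)

theorem mem_of_isPrimitiveMod_of_qf_mul_eq_one (hAAH : AAH) (hI : IsPreNicholsIdeal S I)
    (hGK : FinGK I) {e : Fin θ → ℕ} (he : 2 ≤ ∑ i, e i) {y : TV θ} (hye : y ∈ homogD θ e)
    (hy : IsPrimitiveMod S I y) (hik : i ≠ k)
    (hii : (q i i : ℂ) = -1) (hkk : (q k k : ℂ) = -1) (hqik : qtil q i k = 1)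
    (hi : qf q (δ θ i) e * qf q e (δ θ i) ≠ 1) (hk : qf q (δ θ k) e * qf q e (δ θ k) ≠ 1)
    (hee : qf q e e * (qf q (δ θ i) e * qf q e (δ θ i)) * (qf q (δ θ k) e * qf q e (δ θ k)) = 1) :
    y ∈ I := by
  by_contra hyI
  refine absurd (finiteRootSystem_cons hAAH hI hGK he hye hyI hy)
    (not_finiteRootSystem_of_mul_eq_one (mt (Fin.succ_injective _ ·) hik)
      (Fin.succ_ne_zero i) (Fin.succ_ne_zero k) ?_ ?_ ?_ hi hk hee)
  · simpa [familyBraiding] using hii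
  · simpa [familyBraiding] using hkk
  · simpa [familyBraiding, qtil] using hqik

theorem xw_pair_mem (hAAH : AAH) (hI : IsPreNicholsIdeal S I) (hGK : FinGK I)
    (hii : (q i i : ℂ) = -1) (hkk : (q k k : ℂ) = -1) (hqik : qtil q i k = 1)
    (hj : qtil q i j * qtil q j k ≠ 1) : xw q [i, k] ∈ I := by
  refine mem_of_isPrimitiveMod_of_qf_self_eq_one hAAH hI hGK (sum_degW [i, k]).ge
    (xw_mem_homogD q [i, k]) (j := j) (by simp [IsPrimitiveMod, Δ_xw_pair, hqik]) ?_ ?_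
  all_goals
    simp only [degW_cons, degW_nil, add_zero, qf_add_left, qf_add_right, qf_δ, qtil] at hqik hj ⊢
    grind

theorem isPrimitiveMod_quarticRelator (hI : IsPreNicholsIdeal S I) (hik : qtil q i k = 1)
    (hjk : (q j j : ℂ) = -qtil q j k) (hij : qtil q i j * q j j ^ 2 = 1)
    (hxik : xw q [i, k] ∈ I) :
    IsPrimitiveMod S I (quarticRelator q i j k) := by
  have hleft := hI.mul_left (gen θ j) _ hxik
  have hright := hI.mul_right (gen θ j) _ hxik
  rw [IsPrimitiveMod, Δ_quarticRelator S hik hjk hij, sub_sub_cancel_left]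
  refine Submodule.neg_mem _ (Submodule.smul_mem _ _ (Submodule.add_mem _
    (Submodule.smul_mem _ _ (tmul_mem_mixedSub_right _ hxik)) (tmul_mem_mixedSub_right _ ?_)))
  exact Submodule.add_mem _ (Submodule.smul_mem _ _ hright) (Submodule.smul_mem _ _ hleft)

end Membership

theorem mul_sq_eq_one_of_isPrimitiveRoot_three {R : Type*} [CommRing R] {ζ p : R}
    (hζ : IsPrimitiveRoot ζ 3) (hp : p = ζ ∨ p = -ζ) : ζ * p ^ 2 = 1 := by
  obtain rfl | rfl := hp
  · rw [← pow_succ', hζ.pow_eq_one]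
  · rw [neg_sq, ← pow_succ', hζ.pow_eq_one]

theorem pow_four_ne_one_of_isPrimitiveRoot_three {R : Type*} [CommRing R] {ζ p : R}
    (hζ : IsPrimitiveRoot ζ 3) (hp : p = ζ ∨ p = -ζ) : p ^ 4 ≠ 1 := by
  have hp4 : p ^ 4 = ζ := by
    obtain rfl | rfl := hp
    · rw [pow_succ, hζ.pow_eq_one, one_mul]
    · rw [Even.neg_pow (by decide), pow_succ, hζ.pow_eq_one, one_mul]
  exact hp4 ▸ hζ.ne_one (by norm_num)

theorem statement_9_general {θ : ℕ} {q : Fin θ → Fin θ → ℂˣ} {S : BraidedStr θ q}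
    (hAAH : AAH) {I : Submodule ℂ (TV θ)} (hI : IsPreNicholsIdeal S I) (hGK : FinGK I)
    {i j k : Fin θ} (hik : i ≠ k) (hii : (q i i : ℂ) = -1) (hkk : (q k k : ℂ) = -1)
    (hqik : qtil q i k = 1) (hqjj : (q j j : ℂ) = -qtil q j k)
    (hqij : qtil q i j * q j j ^ 2 = 1) (hqjj4 : (q j j : ℂ) ^ 4 ≠ 1) :
    quarticRelator q i j k ∈ I := by
  have hxik : xw q [i, k] ∈ I := xw_pair_mem hAAH hI hGK hii hkk hqik (j := j) (by grind)
  refine mem_of_isPrimitiveMod_of_qf_mul_eq_one hAAH hI hGK (by rw [sum_degW]; simp)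
    (quarticRelator_mem_homogD q i j k) (isPrimitiveMod_quarticRelator hI hqik hqjj hqij hxik)
    hik hii hkk hqik ?_ ?_ ?_
  all_goals
    simp only [degW_cons, degW_nil, add_zero, qf_add_left, qf_add_right, qf_δ, qtil]
      at hqik hqjj hqij ⊢
    grind

/-- Lemma 3.5: if `q_{ii} = q_{kk} = -1`, `q̃_{ik} = 1`,
`q̃_{ij} ∈ G₃'` and `q_{jj} = -q̃_{jk} = ±q̃_{ij}`, then
`[x_i,x_{jjk}]_c = (1+q_{jj}²)q_{kj}⁻¹[x_{ijk},x_j]_c + (1+q_{jj}²)(1+q_{jj})q_{ij} x_j x_{ijk}`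
in every finite-GKdim pre-Nichols algebra of `q`. -/
theorem statement_9 (θ : ℕ) (q : Fin θ → Fin θ → ℂˣ) (S : BraidedStr θ q)
    (hconn : (dynkin q).Connected)
    (hfd : FiniteDimensional ℂ (TV θ ⧸ Jq S))
    (hAAH : AAH)
    (I : Submodule ℂ (TV θ)) (hI : IsPreNicholsIdeal S I) (hGK : FinGK I)
    (i j k : Fin θ) (hij : i ≠ j) (hik : i ≠ k) (hjk : j ≠ k)
    (h1 : (q i i : ℂ) = -1) (h2 : (q k k : ℂ) = -1) (h3 : qtil q i k = 1)
    (h4 : IsPrimitiveRoot (qtil q i j) 3)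
    (h5 : (q j j : ℂ) = -(qtil q j k))
    (h6 : (q j j : ℂ) = qtil q i j ∨ (q j j : ℂ) = -(qtil q i j)) :
    brk q (δ θ i) (δ θ j + δ θ j + δ θ k) (gen θ i) (xw q [j, j, k]) -
      ((1 + (q j j : ℂ) ^ 2) * ((q k j : ℂ))⁻¹) •
        brk q (δ θ i + δ θ j + δ θ k) (δ θ j) (xw q [i, j, k]) (gen θ j) -
      ((1 + (q j j : ℂ) ^ 2) * (1 + (q j j : ℂ)) * (q i j : ℂ)) •
        (gen θ j * xw q [i, j, k]) ∈ I := by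
  exact statement_9_general hAAH hI hGK hik h1 h2 h3 h5
    (mul_sq_eq_one_of_isPrimitiveRoot_three h4 h6) (pow_four_ne_one_of_isPrimitiveRoot_three h4 h6)

end PreNicholsPaper
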